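/- arXiv:1903.08216 — 2 statements merged into one kernel-verified Lean document; each statement's English description precedes it below -/
import Mathlib

section
/- Let a < b and let f be a real-valued, twice continuously differentiable function on [a, b]. Assume either (1) f'' ≡ 0 on [a, b] and the constant value of f' on [a, b] is irrational, or (2) f''(t) ≠ 0 for all t ∈ [a, b] and there exists n ∈ ℤ with n < f'(a) < n + 1 and n < f'(b) < n + 1. For each ε > 0 let P_ε be the finite family of points {f(εi)/ε} indexed by the integers i with εi ∈ [a, b]. Then P_ε is uniformly distributed in [0, 1] as ε → 0. -/
/-!
The result holds for every function that is `C¹` inside `(a, b)` and whose derivative is irrational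
at almost every point (`tendsto_propIn`). Both cases are instances: in case (1) the derivative is a
constant irrational; in case (2) it is injective by Rolle's theorem, hence rational only on a
countable set.

By Weyl's criterion (`weyl_criterion`) and the portmanteau theorem it suffices to bound exponential
sums. Up to boundary terms of size `O(ε)`, the sum `ε ∑ e(k f(εi)/ε)` is the integral over `[a, b]`
of the step function `t ↦ e(k f(ε⌊t/ε⌋)/ε)` (`abs_mul_sum_sub_integral_le`), and for fixed `M` the
integrand may be replaced by its average over the `M` consecutive indices `⌊t/ε⌋ + j`, `j < M`, at
the cost of another `O(ε)` (`norm_integral_window_sub_le`). Strict differentiability at `t` gives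
`(f(ε(n + j)) - f(εn))/ε → f'(t) j` for `n = ⌊t/ε⌋` as `ε → 0` (`tendsto_increment`), so the
modulus of this average tends to `|(1/M) ∑_{j<M} e(k f'(t) j)|`. Dominated convergence, first in
`ε` and then in `M`, finishes the proof, because the geometric sum is `o(M)` whenever `f'(t)` is
irrational.
-/

open MeasureTheory Filter

/-- The proportion of elements of the finite index set `s` satisfying predicate `P`. -/
noncomputable def propIn {ι : Type*} (s : Finset ι) (P : ι → Prop) : ℝ :=
  haveI := Classical.decPred P
  ((s.filter P).card : ℝ) / (s.card : ℝ)

/-! ### Sums over integers as integrals of step functions -/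

theorem intervalIntegrable_comp_floor {F : Type*} [NormedAddCommGroup F] {w : ℤ → F} {C : ℝ}
    (hw : ∀ i, ‖w i‖ ≤ C) {g : ℝ → ℤ} (hg : Measurable g) (A B : ℝ) :
    IntervalIntegrable (fun s => w (g s)) volume A B := by
  rw [intervalIntegrable_iff]
  refine Measure.integrableOn_of_bounded (M := C) (by simp) ?_ (ae_of_all _ fun s => hw _)
  exact (StronglyMeasurable.of_discrete (f := w)).comp_measurable hg |>.aestronglyMeasurable

theorem integral_comp_floor_add_one (w : ℤ → ℝ) (n : ℤ) :
    ∫ s in (n : ℝ)..((n + 1 : ℤ) : ℝ), w ⌊s⌋ = w n := by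
  have h : ∫ s in (n : ℝ)..((n + 1 : ℤ) : ℝ), w ⌊s⌋ = ∫ s in (n : ℝ)..((n + 1 : ℤ) : ℝ), w n := by
    refine intervalIntegral.integral_congr_Ioo_of_le (by push_cast; linarith) fun s hs => ?_
    have : ⌊s⌋ = n := by
      rw [Int.floor_eq_iff]
      refine ⟨hs.1.le, by simpa using hs.2⟩
    simp only [this]
  rw [h]
  simp

theorem integral_comp_floor {w : ℤ → ℝ} (hw : ∀ i, ‖w i‖ ≤ 1) (m n : ℤ) (hmn : m ≤ n) :
    ∫ s in (m : ℝ)..(n : ℝ), w ⌊s⌋ = ∑ i ∈ Finset.Ico m n, w i := by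
  induction n, hmn using Int.leInduction with
  | base => simp
  | succ n hmn ih =>
    rw [← intervalIntegral.integral_add_adjacent_intervals
      (intervalIntegrable_comp_floor hw Int.measurable_floor _ (n : ℝ))
      (intervalIntegrable_comp_floor hw Int.measurable_floor _ _), ih,
      integral_comp_floor_add_one, Finset.Ico_add_one_right_eq_Icc, ← Finset.Ico_insert_right hmn,
      Finset.sum_insert (by simp), add_comm]

theorem abs_sum_sub_integral_le {w : ℤ → ℝ} (hw : ∀ i, ‖w i‖ ≤ 1) {A B : ℝ} (hAB : A ≤ B) :
    |∑ i ∈ Finset.Icc ⌈A⌉ ⌊B⌋, w i - ∫ s in A..B, w ⌊s⌋| ≤ 2 := by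
  have hle : ⌈A⌉ ≤ ⌊B⌋ + 1 := by
    rw [Int.ceil_le]
    push_cast
    linarith [Int.lt_floor_add_one B]
  have hi := intervalIntegrable_comp_floor hw Int.measurable_floor
  have bd : ∀ x y : ℝ, |y - x| ≤ 1 → |∫ s in x..y, w ⌊s⌋| ≤ 1 := fun x y h =>
    (intervalIntegral.norm_integral_le_of_norm_le_const (C := 1) fun s _ => hw _).trans (by simpa)
  rw [← Finset.Ico_add_one_right_eq_Icc, ← integral_comp_floor hw _ _ hle,
    intervalIntegral.integral_interval_sub_interval_comm (hi _ _) (hi _ _) (hi _ _)]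
  have h1 := bd ⌈A⌉ A (by
    rw [abs_le]; constructor <;> linarith [Int.le_ceil A, Int.ceil_lt_add_one A])
  have h2 := bd (⌊B⌋ + 1 : ℤ) B (by
    push_cast
    rw [abs_le]; constructor <;> linarith [Int.floor_le B, Int.lt_floor_add_one B])
  exact (abs_sub _ _).trans (by linarith)

/-- The sum over `ε i ∈ [a, b]`, scaled by `ε`, differs from the integral of the step function
`t ↦ w ⌊t / ε⌋` only by two boundary terms of size at most `ε`. -/
theorem abs_mul_sum_sub_integral_le {w : ℤ → ℝ} (hw : ∀ i, ‖w i‖ ≤ 1) {a b ε : ℝ} (hab : a ≤ b)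
    (hε : 0 < ε) :
    |ε * ∑ i ∈ Finset.Icc ⌈a / ε⌉ ⌊b / ε⌋, w i - ∫ t in a..b, w ⌊t / ε⌋| ≤ 2 * ε := by
  rw [intervalIntegral.integral_comp_div (fun s => w ⌊s⌋) hε.ne', smul_eq_mul, ← mul_sub, abs_mul,
    abs_of_pos hε, mul_comm 2]
  gcongr
  exact abs_sum_sub_integral_le hw (by gcongr)

/-- Shifting the index by `j` is translating the variable by `ε j`, which affects only the ends of
the interval of integration. -/
theorem norm_integral_shift_sub_le {w : ℤ → ℂ} (hw : ∀ i, ‖w i‖ ≤ 1) (a b : ℝ) {ε : ℝ}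
    (hε : 0 < ε) (j : ℕ) :
    ‖(∫ t in a..b, w (⌊t / ε⌋ + j)) - ∫ t in a..b, w ⌊t / ε⌋‖ ≤ 2 * ε * j := by
  have h1 : ∫ t in a..b, w (⌊t / ε⌋ + j) = ∫ t in (a + ε * j)..(b + ε * j), w ⌊t / ε⌋ := by
    rw [← intervalIntegral.integral_comp_add_right (fun t => w ⌊t / ε⌋)]
    refine intervalIntegral.integral_congr fun t _ => ?_
    rw [add_div, mul_div_cancel_left₀ _ hε.ne', Int.floor_add_natCast]
  have hi : ∀ A B, IntervalIntegrable (fun t => w ⌊t / ε⌋) volume A B :=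
    intervalIntegrable_comp_floor hw (Int.measurable_floor.comp (measurable_id.div_const ε))
  have bd : ∀ x : ℝ, ‖∫ t in (x + ε * j)..x, w ⌊t / ε⌋‖ ≤ ε * j := fun x =>
    (intervalIntegral.norm_integral_le_of_norm_le_const (C := 1) fun s _ => hw _).trans
      (by simp [abs_of_pos hε])
  rw [h1, intervalIntegral.integral_interval_sub_interval_comm (hi _ _) (hi _ _) (hi _ _)]
  exact (norm_sub_le _ _).trans (by linarith [bd a, bd b])

/-! ### Characters and local increments -/

/-- The additive character `x ↦ e^(2πikx)` of `ℝ`, obtained by pulling back the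
character `fourier k` of the circle. -/
noncomputable def ch (k : ℤ) (x : ℝ) : ℂ := fourier k (x : UnitAddCircle)

theorem ch_eq (k : ℤ) (x : ℝ) : ch k x = Complex.exp (2 * Real.pi * Complex.I * k * x) := by
  simp [ch]

theorem ch_add (k : ℤ) (x y : ℝ) : ch k (x + y) = ch k x * ch k y := by
  simp only [ch_eq, ← Complex.exp_add]
  congr 1
  push_cast
  ring

theorem ch_mul_nat (k : ℤ) (x : ℝ) (j : ℕ) : ch k (x * j) = ch k x ^ j := by
  simp only [ch_eq, ← Complex.exp_nat_mul]
  congr 1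
  push_cast
  ring

theorem norm_ch (k : ℤ) (x : ℝ) : ‖ch k x‖ = 1 := by
  rw [ch, fourier_apply, Circle.norm_coe]

theorem continuous_ch (k : ℤ) : Continuous (ch k) := by
  have : ch k = fun x : ℝ => Complex.exp (2 * Real.pi * Complex.I * k * x) := funext (ch_eq k)
  rw [this]
  fun_prop

theorem ch_ne_one {k : ℤ} (hk : k ≠ 0) {x : ℝ} (hx : Irrational x) : ch k x ≠ 1 := by
  rw [ch_eq, Ne, Complex.exp_eq_one_iff]
  rintro ⟨n, hn⟩
  have h2 : (k : ℂ) * x = n := by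
    have := Complex.two_pi_I_ne_zero
    apply mul_right_cancel₀ this
    linear_combination hn
  have h3 : (k : ℝ) * x = n := by exact_mod_cast h2
  exact (hx.intCast_mul hk).ne_int n h3

theorem tendsto_avg_pow {z : ℂ} (hz : ‖z‖ = 1) (hz1 : z ≠ 1) :
    Tendsto (fun M : ℕ => ‖(M : ℂ)⁻¹ * ∑ j ∈ Finset.range M, z ^ j‖) atTop (nhds 0) := by
  have h0 : Tendsto (fun M : ℕ => (M : ℝ)⁻¹ * (2 / ‖z - 1‖)) atTop (nhds 0) := by
    simpa using (tendsto_inv_atTop_nhds_zero_nat (𝕜 := ℝ)).mul_const (2 / ‖z - 1‖)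
  refine squeeze_zero (fun _ => norm_nonneg _) (fun M => ?_) h0
  rw [norm_mul, norm_inv, Complex.norm_natCast, geom_sum_eq hz1, norm_div]
  gcongr
  exact (norm_sub_le _ _).trans (by simp [hz]; norm_num)

/-- At a point of strict differentiability, the values `f (ε n) / ε` near `n = t / ε` advance
asymptotically by the constant step `f'(t)`. -/
theorem tendsto_increment {f : ℝ → ℝ} {t g : ℝ} (hf : HasStrictDerivAt f g t) (j : ℕ) :
    Tendsto (fun ε : ℝ => (f (ε * (⌊t / ε⌋ + j : ℤ)) - f (ε * ⌊t / ε⌋)) / ε)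
      (nhdsWithin 0 (Set.Ioi 0)) (nhds (g * j)) := by
  have hid : Tendsto (fun ε : ℝ => ε) (nhdsWithin 0 (Set.Ioi 0)) (nhds 0) :=
    tendsto_nhdsWithin_of_tendsto_nhds tendsto_id
  have hx : Tendsto (fun ε : ℝ => ε * (⌊t / ε⌋ : ℝ)) (nhdsWithin 0 (Set.Ioi 0)) (nhds t) := by
    have hl : Tendsto (fun ε : ℝ => t - ε) (nhdsWithin 0 (Set.Ioi 0)) (nhds t) := by
      simpa using hid.const_sub t
    refine tendsto_of_tendsto_of_tendsto_of_le_of_le' hl tendsto_const_nhds ?_ ?_ <;>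
    · filter_upwards [self_mem_nhdsWithin] with ε (hε : 0 < ε)
      have h1 := Int.floor_le (t / ε)
      have h2 := (Int.lt_floor_add_one (t / ε)).le
      rw [le_div_iff₀ hε] at h1
      rw [div_le_iff₀ hε] at h2
      linarith
  have hy : Tendsto (fun ε : ℝ => ε * ((⌊t / ε⌋ + j : ℤ) : ℝ)) (nhdsWithin 0 (Set.Ioi 0))
      (nhds t) := by
    have := hx.add (hid.mul_const (j : ℝ))
    simp only [zero_mul, add_zero] at this
    refine this.congr fun ε => ?_
    push_cast
    ring
  have ho := hf.hasStrictFDerivAt.isLittleO.comp_tendsto (hy.prodMk_nhds hx)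
  have ho' : (fun ε : ℝ => f (ε * (⌊t / ε⌋ + j : ℤ)) - f (ε * ⌊t / ε⌋) - ε * (g * j))
      =o[nhdsWithin 0 (Set.Ioi 0)] (fun ε : ℝ => ε) := by
    refine (ho.congr' ?_ ?_).trans_isBigO
      (Asymptotics.isBigO_const_mul_self (j : ℝ) (fun ε : ℝ => ε) _)
    · refine Eventually.of_forall fun ε => ?_
      simp
      ring
    · refine Eventually.of_forall fun ε => ?_
      simp
      ring
  have := ho'.tendsto_div_nhds_zero.add_const (g * j)
  rw [zero_add] at this
  refine this.congr' ?_
  filter_upwards [self_mem_nhdsWithin] with ε (hε : 0 < ε)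
  field_simp
  ring

/-! ### Exponential sums -/

/-- The average of the character over the window of `M` consecutive indices starting at
`⌊t / ε⌋`. -/
noncomputable def window (f : ℝ → ℝ) (k : ℤ) (M : ℕ) (ε t : ℝ) : ℂ :=
  (M : ℂ)⁻¹ * ∑ j ∈ Finset.range M, ch k (f (ε * (⌊t / ε⌋ + j : ℤ)) / ε)

theorem norm_avg_le_one {M : ℕ} {z : ℕ → ℂ} (hz : ∀ j, ‖z j‖ ≤ 1) :
    ‖(M : ℂ)⁻¹ * ∑ j ∈ Finset.range M, z j‖ ≤ 1 := by
  rw [norm_mul, norm_inv, Complex.norm_natCast]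
  have h : ‖∑ j ∈ Finset.range M, z j‖ ≤ M := by
    simpa using norm_sum_le_of_le (Finset.range M) fun j _ => hz j
  calc (M : ℝ)⁻¹ * ‖∑ j ∈ Finset.range M, z j‖ ≤ (M : ℝ)⁻¹ * M := by gcongr
    _ ≤ 1 := inv_mul_le_one

theorem measurable_window (f : ℝ → ℝ) (k : ℤ) (M : ℕ) (ε : ℝ) : Measurable (window f k M ε) := by
  have : Measurable fun n : ℤ =>
      (M : ℂ)⁻¹ * ∑ j ∈ Finset.range M, ch k (f (ε * (n + j : ℤ)) / ε) := .of_discrete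
  exact this.comp (Int.measurable_floor.comp (measurable_id.div_const ε))

/-- Factoring the first term out of the window leaves the local increments, so the modulus of the
window average tends to that of a normalised geometric sum of ratio `e^(2πikg)`. -/
theorem tendsto_norm_window {f : ℝ → ℝ} {t g : ℝ} (hf : HasStrictDerivAt f g t) (k : ℤ) (M : ℕ) :
    Tendsto (fun ε => ‖window f k M ε t‖) (nhdsWithin 0 (Set.Ioi 0))
      (nhds ‖(M : ℂ)⁻¹ * ∑ j ∈ Finset.range M, ch k g ^ j‖) := by
  have h : Tendsto (fun ε : ℝ => ‖(M : ℂ)⁻¹ * ∑ j ∈ Finset.range M,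
      ch k ((f (ε * (⌊t / ε⌋ + j : ℤ)) - f (ε * ⌊t / ε⌋)) / ε)‖) (nhdsWithin 0 (Set.Ioi 0))
      (nhds ‖(M : ℂ)⁻¹ * ∑ j ∈ Finset.range M, ch k g ^ j‖) := by
    simp only [← ch_mul_nat]
    exact ((tendsto_finsetSum _ fun j _ =>
      ((continuous_ch k).tendsto _).comp (tendsto_increment hf j)).const_mul _).norm
  refine h.congr fun ε => ?_
  have hs : ∀ j : ℕ, ch k (f (ε * (⌊t / ε⌋ + j : ℤ)) / ε) = ch k (f (ε * ⌊t / ε⌋) / ε) *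
      ch k ((f (ε * (⌊t / ε⌋ + j : ℤ)) - f (ε * ⌊t / ε⌋)) / ε) := fun j => by
    rw [← ch_add]
    congr 1
    ring
  rw [window]
  simp only [hs, ← Finset.mul_sum]
  rw [mul_left_comm, norm_mul (ch k _), norm_ch, one_mul]

theorem norm_integral_window_sub_le (f : ℝ → ℝ) (k : ℤ) (a b : ℝ) {M : ℕ} (hM : 0 < M) {ε : ℝ}
    (hε : 0 < ε) :
    ‖(∫ t in a..b, window f k M ε t) - ∫ t in a..b, ch k (f (ε * ⌊t / ε⌋) / ε)‖ ≤ 2 * ε * M := by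
  have hw : ∀ i : ℤ, ‖ch k (f (ε * i) / ε)‖ ≤ 1 := fun i => (norm_ch _ _).le
  have hfl : Measurable fun t : ℝ => ⌊t / ε⌋ :=
    Int.measurable_floor.comp (measurable_id.div_const ε)
  have h1 : (∫ t in a..b, window f k M ε t) - ∫ t in a..b, ch k (f (ε * ⌊t / ε⌋) / ε) =
      (M : ℂ)⁻¹ * ∑ j ∈ Finset.range M, ((∫ t in a..b, ch k (f (ε * (⌊t / ε⌋ + j : ℤ)) / ε)) -
        ∫ t in a..b, ch k (f (ε * ⌊t / ε⌋) / ε)) := by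
    have hM' : (M : ℂ) ≠ 0 := by exact_mod_cast hM.ne'
    simp only [window]
    rw [intervalIntegral.integral_const_mul, intervalIntegral.integral_finsetSum,
      Finset.sum_sub_distrib, Finset.sum_const, Finset.card_range, nsmul_eq_mul, mul_sub,
      inv_mul_cancel_left₀ hM']
    exact fun j _ => intervalIntegrable_comp_floor hw (hfl.add_const (j : ℤ)) a b
  rw [h1, norm_mul, norm_inv, Complex.norm_natCast]
  have h2 : ‖∑ j ∈ Finset.range M, ((∫ t in a..b, ch k (f (ε * (⌊t / ε⌋ + j : ℤ)) / ε)) -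
        ∫ t in a..b, ch k (f (ε * ⌊t / ε⌋) / ε))‖ ≤ M * (2 * ε * M) := by
    have := norm_sum_le_of_le (Finset.range M) (n := fun _ => 2 * ε * M) fun j hj =>
      (norm_integral_shift_sub_le hw a b hε j).trans (by
        gcongr
        exact (Finset.mem_range.1 hj).le)
    simpa using this
  rw [inv_mul_le_iff₀ (by exact_mod_cast hM)]
  exact h2

theorem tendsto_integral_norm_avg_pow {g : ℝ → ℝ} (hgm : Measurable g) {a b : ℝ}
    (hg : ∀ᵐ t, t ∈ Set.uIoc a b → Irrational (g t)) {k : ℤ} (hk : k ≠ 0) :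
    Tendsto (fun M : ℕ => ∫ t in a..b, ‖(M : ℂ)⁻¹ * ∑ j ∈ Finset.range M, ch k (g t) ^ j‖)
      atTop (nhds 0) := by
  have h := intervalIntegral.tendsto_integral_filter_of_dominated_convergence
    (μ := volume) (a := a) (b := b) (l := atTop) (f := fun _ => (0 : ℝ))
    (F := fun (M : ℕ) t => ‖(M : ℂ)⁻¹ * ∑ j ∈ Finset.range M, ch k (g t) ^ j‖) (fun _ => 1)
    (Eventually.of_forall fun M => ?_)
    (Eventually.of_forall fun M => ae_of_all _ fun t _ => ?_) (by simp) ?_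
  · simpa using h
  · have : Continuous fun x : ℝ => ‖(M : ℂ)⁻¹ * ∑ j ∈ Finset.range M, ch k x ^ j‖ := by
      have := continuous_ch k
      fun_prop
    exact (this.measurable.comp hgm).aestronglyMeasurable
  · rw [norm_norm]
    exact norm_avg_le_one fun j => by simp [norm_ch]
  · filter_upwards [hg] with t ht htm
    exact tendsto_avg_pow (norm_ch _ _) (ch_ne_one hk (ht htm))

theorem tendsto_integral_norm_window {f : ℝ → ℝ} {a b : ℝ}
    (hf : ∀ᵐ t, t ∈ Set.uIoc a b → HasStrictDerivAt f (deriv f t) t) (k : ℤ) (M : ℕ) :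
    Tendsto (fun ε => ∫ t in a..b, ‖window f k M ε t‖) (nhdsWithin 0 (Set.Ioi 0))
      (nhds (∫ t in a..b, ‖(M : ℂ)⁻¹ * ∑ j ∈ Finset.range M, ch k (deriv f t) ^ j‖)) := by
  refine intervalIntegral.tendsto_integral_filter_of_dominated_convergence (fun _ => 1)
    (Eventually.of_forall fun ε => (measurable_window f k M ε).norm.aestronglyMeasurable)
    (Eventually.of_forall fun ε => ae_of_all _ fun t _ => ?_) (by simp) ?_
  · rw [norm_norm]
    exact norm_avg_le_one fun j => (norm_ch _ _).le
  · filter_upwards [hf] with t ht htm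
    exact tendsto_norm_window (ht htm) k M

/-- The exponential sums required by Weyl's criterion tend to zero: for a fixed window length `M`,
the limit superior of the left side is at most the integral of the modulus of the geometric sum of
length `M`, and that integral tends to zero as `M → ∞`. -/
theorem tendsto_integral_ch {f : ℝ → ℝ} {a b : ℝ} (hab : a ≤ b)
    (hf : ∀ᵐ t, t ∈ Set.uIoc a b → HasStrictDerivAt f (deriv f t) t)
    (hg : ∀ᵐ t, t ∈ Set.uIoc a b → Irrational (deriv f t)) {k : ℤ} (hk : k ≠ 0) :
    Tendsto (fun ε : ℝ => ∫ t in a..b, ch k (f (ε * ⌊t / ε⌋) / ε)) (nhdsWithin 0 (Set.Ioi 0))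
      (nhds 0) := by
  rw [Metric.tendsto_nhds]
  intro η hη
  obtain ⟨M, hMη, hM⟩ := (((tendsto_integral_norm_avg_pow (measurable_deriv f) hg
    hk).eventually_lt_const (half_pos hη)).and (eventually_gt_atTop 0)).exists
  have hε0 : Tendsto (fun ε : ℝ => 2 * ε * M) (nhdsWithin 0 (Set.Ioi 0)) (nhds 0) := by
    have : Tendsto (fun ε : ℝ => 2 * ε * M) (nhds 0) (nhds (2 * 0 * M)) :=
      Continuous.tendsto (by fun_prop) 0
    simpa using tendsto_nhdsWithin_of_tendsto_nhds this
  filter_upwards [(tendsto_integral_norm_window hf k M).eventually_lt_const hMη,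
    hε0.eventually_lt_const (half_pos hη), self_mem_nhdsWithin] with ε h1 h2 (hε : 0 < ε)
  rw [dist_zero_right]
  have h3 := norm_integral_window_sub_le f k a b hM hε
  have h4 := intervalIntegral.norm_integral_le_integral_norm (f := window f k M ε)
    (μ := volume) hab
  have h5 := norm_sub_norm_le (∫ t in a..b, ch k (f (ε * ⌊t / ε⌋) / ε))
    (∫ t in a..b, window f k M ε t)
  rw [norm_sub_rev] at h5
  linarith

/-! ### Weak convergence to Haar measure on the circle -/

/-- The Haar probability measure on the circle, as a `ProbabilityMeasure`. -/
noncomputable def haarProb : ProbabilityMeasure UnitAddCircle :=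
  ⟨AddCircle.haarAddCircle, inferInstance⟩

theorem integral_fourier_haar {k : ℤ} (hk : k ≠ 0) :
    ∫ x : UnitAddCircle, fourier k x ∂AddCircle.haarAddCircle = 0 := by
  have h := congrFun (fourierCoeff_fourier (T := 1) k) 0
  rw [fourierCoeff, Pi.single_eq_of_ne hk.symm] at h
  simpa using h

/-- Weyl's criterion: the test functions whose integrals converge form a closed subspace of the
continuous functions, and the characters span a dense subspace. -/
theorem weyl_criterion {ι : Type*} {L : Filter ι} {μs : ι → ProbabilityMeasure UnitAddCircle}
    (h : ∀ k : ℤ, k ≠ 0 →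
      Tendsto (fun i => ∫ x, fourier k x ∂(μs i : Measure UnitAddCircle)) L (nhds 0)) :
    Tendsto μs L (nhds haarProb) := by
  have hgi : ∀ (g : C(UnitAddCircle, ℂ)) (μ : ProbabilityMeasure UnitAddCircle),
      Integrable g (μ : Measure UnitAddCircle) := fun g μ =>
    (BoundedContinuousFunction.mkOfCompact g).integrable _
  have hspan : ∀ g ∈ Submodule.span ℂ (Set.range (fourier (T := (1 : ℝ)))),
      Tendsto (fun i => ∫ x, g x ∂(μs i : Measure UnitAddCircle)) L
        (nhds (∫ x, g x ∂(haarProb : Measure UnitAddCircle))) := by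
    intro g hg
    induction hg using Submodule.span_induction with
    | mem g hg =>
      obtain ⟨k, rfl⟩ := hg
      by_cases hk : k = 0
      · subst hk
        simpa using tendsto_const_nhds
      · have := h k hk
        rwa [← integral_fourier_haar hk] at this
    | zero => simpa using tendsto_const_nhds
    | add g₁ g₂ _ _ h₁ h₂ =>
      simp only [ContinuousMap.add_apply, integral_add (hgi g₁ _) (hgi g₂ _)]
      exact h₁.add h₂
    | smul c g _ hg =>
      simp only [ContinuousMap.smul_apply, integral_smul]
      exact hg.const_smul c
  have hall : ∀ g : C(UnitAddCircle, ℂ),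
      Tendsto (fun i => ∫ x, g x ∂(μs i : Measure UnitAddCircle)) L
        (nhds (∫ x, g x ∂(haarProb : Measure UnitAddCircle))) := by
    intro g
    have hg : g ∈ closure (Submodule.span ℂ (Set.range (fourier (T := (1 : ℝ)))) : Set _) := by
      rw [← Submodule.topologicalClosure_coe, span_fourier_closure_eq_top]
      trivial
    rw [Metric.tendsto_nhds]
    intro η hη
    obtain ⟨p, hp, hgp⟩ := Metric.mem_closure_iff.1 hg (η / 3) (by positivity)
    have hclose : ∀ μ : ProbabilityMeasure UnitAddCircle,
        dist (∫ x, g x ∂(μ : Measure UnitAddCircle)) (∫ x, p x ∂(μ : Measure UnitAddCircle))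
          ≤ η / 3 := fun μ => by
      rw [dist_eq_norm, ← integral_sub (hgi g μ) (hgi p μ)]
      refine (norm_integral_le_of_norm_le_const (C := η / 3) (ae_of_all _ fun x => ?_)).trans
        (by simp)
      rw [← dist_eq_norm]
      exact (ContinuousMap.dist_apply_le_dist x).trans hgp.le
    filter_upwards [Metric.tendsto_nhds.1 (hspan p hp) (η / 3) (by positivity)] with i hi
    have h1 := hclose (μs i)
    have h2 := hclose haarProb
    rw [dist_comm] at h2
    have h3 := dist_triangle4 (∫ x, g x ∂(μs i : Measure UnitAddCircle))
      (∫ x, p x ∂(μs i : Measure UnitAddCircle)) (∫ x, p x ∂(haarProb : Measure UnitAddCircle))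
      (∫ x, g x ∂(haarProb : Measure UnitAddCircle))
    linarith
  rw [ProbabilityMeasure.tendsto_iff_forall_integral_tendsto]
  intro φ
  have hφ := (Complex.continuous_re.tendsto _).comp
    (hall ⟨fun x => (φ x : ℂ), Complex.continuous_ofReal.comp φ.continuous⟩)
  refine Tendsto.congr (fun i => ?_) (hφ.trans (le_of_eq (congrArg nhds ?_))) <;>
  · simp [integral_complex_ofReal]

/-- Landing in the arc `[c, d)` of the circle is the fractional-part condition, since
`[c, d) ⊆ [0, 1)`. -/
theorem coe_mem_arc_iff {c d : ℝ} (hc : 0 ≤ c) (hd : d ≤ 1) (y : ℝ) :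
    (y : UnitAddCircle) ∈ ((↑) : ℝ → UnitAddCircle) '' Set.Ico c d ↔ Int.fract y ∈ Set.Ico c d := by
  have hy : ((Int.fract y : ℝ) : UnitAddCircle) = y := AddCircle.coe_fract y
  constructor
  · rintro ⟨x, hx, hxy⟩
    rw [← hy, AddCircle.coe_eq_coe_iff_of_mem_Ico (a := (0 : ℝ))] at hxy
    · exact hxy ▸ hx
    · exact ⟨hc.trans hx.1, by linarith [hx.2]⟩
    · exact ⟨Int.fract_nonneg y, by simpa using Int.fract_lt_one y⟩
  · exact fun h => ⟨_, h, hy⟩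

/-- Haar measure on the circle is Lebesgue measure on the fundamental domain `[0, 1)`. -/
theorem haar_eq_volume_preimage {E : Set UnitAddCircle} (hE : MeasurableSet E) :
    (haarProb : Measure UnitAddCircle) E =
      volume (((↑) : ℝ → UnitAddCircle) ⁻¹' E ∩ Set.Ico 0 1) := by
  have h1 : (haarProb : Measure UnitAddCircle) = volume := by
    simp [haarProb, AddCircle.volume_eq_smul_haarAddCircle]
  have h2 := UnitAddCircle.measurePreserving_mk 0
  rw [h1, ← h2.measure_preimage hE.nullMeasurableSet, zero_add,
    ← restrict_Ico_eq_restrict_Ioc, Measure.restrict_apply (h2.measurable hE)]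

theorem measurableSet_arc (c d : ℝ) :
    MeasurableSet (((↑) : ℝ → UnitAddCircle) '' Set.Ico c d) := by
  rcases le_or_gt d c with h | h
  · simp [Set.Ico_eq_empty_of_le h]
  · rw [← Set.Ioo_insert_left h, Set.image_insert_eq]
    have ho : IsOpen (((↑) : ℝ → UnitAddCircle) '' Set.Ioo c d) :=
      QuotientAddGroup.isOpenMap_coe _ isOpen_Ioo
    exact ho.measurableSet.insert _

theorem haar_arc {c d : ℝ} (hc : 0 ≤ c) (hd : d ≤ 1) :
    (haarProb : Measure UnitAddCircle) (((↑) : ℝ → UnitAddCircle) '' Set.Ico c d) =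
      ENNReal.ofReal (d - c) := by
  have : ((↑) : ℝ → UnitAddCircle) ⁻¹' (((↑) : ℝ → UnitAddCircle) '' Set.Ico c d) ∩ Set.Ico 0 1 =
      Set.Ico c d := by
    ext y
    rw [Set.mem_inter_iff, Set.mem_preimage, coe_mem_arc_iff hc hd]
    constructor
    · rintro ⟨h, hy⟩
      rwa [Int.fract_eq_self.2 hy] at h
    · intro h
      have hy : y ∈ Set.Ico (0 : ℝ) 1 := ⟨hc.trans h.1, h.2.trans_le hd⟩
      exact ⟨by rwa [Int.fract_eq_self.2 hy], hy⟩
  rw [haar_eq_volume_preimage (measurableSet_arc c d), this, Real.volume_Ico]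

theorem haar_singleton (x : UnitAddCircle) : (haarProb : Measure UnitAddCircle) {x} = 0 := by
  rw [haar_eq_volume_preimage (measurableSet_singleton x)]
  refine Set.Subsingleton.measure_zero (fun y hy z hz => ?_) _
  rw [← AddCircle.coe_eq_coe_iff_of_mem_Ico (p := (1 : ℝ)) (a := 0) (by simpa using hy.2)
    (by simpa using hz.2)]
  exact hy.1.trans hz.1.symm

theorem haar_frontier_arc (c d : ℝ) :
    (haarProb : Measure UnitAddCircle)
      (frontier (((↑) : ℝ → UnitAddCircle) '' Set.Ico c d)) = 0 := by
  have hcont : Continuous ((↑) : ℝ → UnitAddCircle) := AddCircle.continuous_mk' 1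
  have hclo : closure (((↑) : ℝ → UnitAddCircle) '' Set.Ico c d) ⊆ (↑) '' Set.Icc c d :=
    closure_minimal (Set.image_mono Set.Ico_subset_Icc_self)
      (isCompact_Icc.image hcont).isClosed
  have hgi : ((↑) : ℝ → UnitAddCircle) '' Set.Ioo c d ⊆
      interior (((↑) : ℝ → UnitAddCircle) '' Set.Ico c d) :=
    interior_maximal (Set.image_mono Set.Ioo_subset_Ico_self)
      (QuotientAddGroup.isOpenMap_coe _ isOpen_Ioo)
  have hsub : frontier (((↑) : ℝ → UnitAddCircle) '' Set.Ico c d) ⊆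
      {(c : UnitAddCircle)} ∪ {(d : UnitAddCircle)} := by
    rintro _ ⟨h1, h2⟩
    obtain ⟨x, hx, rfl⟩ := hclo h1
    by_cases hxc : x = c
    · exact Or.inl (by simp [hxc])
    by_cases hxd : x = d
    · exact Or.inr (by simp [hxd])
    exact absurd (hgi ⟨x, ⟨lt_of_le_of_ne hx.1 (Ne.symm hxc), lt_of_le_of_ne hx.2 hxd⟩, rfl⟩) h2
  exact measure_mono_null hsub (measure_union_null (haar_singleton _) (haar_singleton _))

/-! ### Uniform distribution of the points -/

theorem measurable_point (f : ℝ → ℝ) (ε : ℝ) :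
    Measurable fun t : ℝ => ((f (ε * ⌊t / ε⌋) / ε : ℝ) : UnitAddCircle) := by
  have : Measurable fun n : ℤ => ((f (ε * n) / ε : ℝ) : UnitAddCircle) := .of_discrete
  exact this.comp (Int.measurable_floor.comp (measurable_id.div_const ε))

/-- The law on the circle of the point `f (ε ⌊t / ε⌋) / ε`, for `t` uniform in `(a, b]`. Up to
boundary terms it is the empirical measure of the points `f (ε i) / ε` with `ε i ∈ [a, b]`. -/
noncomputable def law {a b : ℝ} (hab : a < b) (f : ℝ → ℝ) (ε : ℝ) :
    ProbabilityMeasure UnitAddCircle :=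
  ⟨(ProbabilityTheory.cond volume (Set.Ioc a b)).map
      fun t : ℝ => ((f (ε * ⌊t / ε⌋) / ε : ℝ) : UnitAddCircle), by
    have : IsProbabilityMeasure (ProbabilityTheory.cond volume (Set.Ioc a b)) :=
      ProbabilityTheory.cond_isProbabilityMeasure_of_finite (by simp [hab]) (by simp)
    exact Measure.isProbabilityMeasure_map (measurable_point f ε).aemeasurable⟩

theorem integral_law {F : Type*} [NormedAddCommGroup F] [NormedSpace ℝ F] {a b : ℝ} (hab : a < b)
    (f : ℝ → ℝ) (ε : ℝ) {g : UnitAddCircle → F} (hg : StronglyMeasurable g) :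
    ∫ x, g x ∂(law hab f ε : Measure UnitAddCircle) =
      (b - a)⁻¹ • ∫ t in a..b, g ((f (ε * ⌊t / ε⌋) / ε : ℝ) : UnitAddCircle) := by
  simp only [law, ProbabilityMeasure.coe_mk]
  rw [integral_map (measurable_point f ε).aemeasurable hg.aestronglyMeasurable,
    ProbabilityTheory.cond, integral_smul_measure, intervalIntegral.integral_of_le hab.le]
  simp [hab.le]

theorem tendsto_law {f : ℝ → ℝ} {a b : ℝ} (hab : a < b)
    (hf : ∀ᵐ t, t ∈ Set.uIoc a b → HasStrictDerivAt f (deriv f t) t)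
    (hg : ∀ᵐ t, t ∈ Set.uIoc a b → Irrational (deriv f t)) :
    Tendsto (law hab f) (nhdsWithin 0 (Set.Ioi 0)) (nhds haarProb) := by
  refine weyl_criterion fun k hk => ?_
  simp only [integral_law hab f _ (fourier k).continuous.stronglyMeasurable]
  have h := (tendsto_integral_ch hab.le hf hg hk).const_smul (b - a)⁻¹
  rwa [smul_zero] at h

/-- Riemann-type sums over `ε i ∈ [a, b]` and integrals of the corresponding step functions have
the same limit. -/
theorem tendsto_mul_sum {a b l : ℝ} (hab : a ≤ b) {w : ℝ → ℤ → ℝ} (hw : ∀ ε i, ‖w ε i‖ ≤ 1)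
    (h : Tendsto (fun ε => ∫ t in a..b, w ε ⌊t / ε⌋) (nhdsWithin 0 (Set.Ioi 0)) (nhds l)) :
    Tendsto (fun ε => ε * ∑ i ∈ Finset.Icc ⌈a / ε⌉ ⌊b / ε⌋, w ε i)
      (nhdsWithin 0 (Set.Ioi 0)) (nhds l) := by
  have h0 : Tendsto (fun ε : ℝ => ε * ∑ i ∈ Finset.Icc ⌈a / ε⌉ ⌊b / ε⌋, w ε i -
      ∫ t in a..b, w ε ⌊t / ε⌋) (nhdsWithin 0 (Set.Ioi 0)) (nhds 0) := by
    refine squeeze_zero_norm' (a := fun ε : ℝ => 2 * ε) ?_ ?_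
    · filter_upwards [self_mem_nhdsWithin] with ε (hε : 0 < ε)
      exact abs_mul_sum_sub_integral_le (hw ε) hab hε
    · have : Tendsto (fun ε : ℝ => 2 * ε) (nhds 0) (nhds (2 * 0)) :=
        Continuous.tendsto (by fun_prop) 0
      simpa using tendsto_nhdsWithin_of_tendsto_nhds this
  simpa using h0.add h

/-- A function that is strictly differentiable almost everywhere on `(a, b]`, with almost everywhere
irrational derivative, produces uniformly distributed points. -/
theorem tendsto_propIn {f : ℝ → ℝ} {a b : ℝ} (hab : a < b)
    (hf : ∀ᵐ t, t ∈ Set.uIoc a b → HasStrictDerivAt f (deriv f t) t)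
    (hg : ∀ᵐ t, t ∈ Set.uIoc a b → Irrational (deriv f t))
    {c d : ℝ} (hc : 0 ≤ c) (hcd : c ≤ d) (hd : d ≤ 1) :
    Tendsto
      (fun ε : ℝ => propIn (Finset.Icc ⌈a / ε⌉ ⌊b / ε⌋)
        (fun i : ℤ => Int.fract (f (ε * i) / ε) ∈ Set.Ico c d))
      (nhdsWithin 0 (Set.Ioi 0)) (nhds (d - c)) := by
  classical
  set E : Set UnitAddCircle := ((↑) : ℝ → UnitAddCircle) '' Set.Ico c d with hE
  have hEm : MeasurableSet E := measurableSet_arc c d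
  have hba : b - a ≠ 0 := (sub_pos.2 hab).ne'
  have h1 : Tendsto (fun ε => (law hab f ε : Measure UnitAddCircle).real E)
      (nhdsWithin 0 (Set.Ioi 0)) (nhds (d - c)) := by
    have h := ProbabilityMeasure.tendsto_measure_of_null_frontier_of_tendsto'
      (tendsto_law hab hf hg) (haar_frontier_arc c d)
    rw [haar_arc hc hd] at h
    have h' := (ENNReal.tendsto_toReal ENNReal.ofReal_ne_top).comp h
    rwa [ENNReal.toReal_ofReal (sub_nonneg.2 hcd)] at h'
  set w : ℝ → ℤ → ℝ := fun ε i => E.indicator 1 ((f (ε * i) / ε : ℝ) : UnitAddCircle) with hwdef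
  have hw : ∀ ε i, ‖w ε i‖ ≤ 1 := fun ε i => by
    simp only [hwdef, Set.indicator_apply]
    split_ifs <;> simp
  have h2 : Tendsto (fun ε => ∫ t in a..b, w ε ⌊t / ε⌋) (nhdsWithin 0 (Set.Ioi 0))
      (nhds ((b - a) * (d - c))) := by
    refine (h1.const_mul (b - a)).congr fun ε => ?_
    rw [← integral_indicator_one hEm, integral_law hab f ε
      (stronglyMeasurable_one.indicator hEm), smul_eq_mul, mul_inv_cancel_left₀ hba]
  have h3 : Tendsto (fun ε : ℝ => ε * ∑ i ∈ Finset.Icc ⌈a / ε⌉ ⌊b / ε⌋, (1 : ℝ))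
      (nhdsWithin 0 (Set.Ioi 0)) (nhds (b - a)) :=
    tendsto_mul_sum hab.le (w := fun _ _ => 1) (by simp) (by simp)
  -- Numerator and denominator of the proportion, each multiplied by `ε`.
  have h4 := (tendsto_mul_sum hab.le hw h2).div h3 hba
  rw [mul_div_cancel_left₀ _ hba] at h4
  refine h4.congr' ?_
  filter_upwards [self_mem_nhdsWithin] with ε (hε : 0 < ε)
  simp only [Pi.div_apply]
  rw [mul_div_mul_left _ _ hε.ne', propIn]
  simp only [hwdef, Set.indicator_apply, Pi.one_apply, hE, coe_mem_arc_iff hc hd]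
  simp only [Finset.sum_boole, Finset.sum_const, nsmul_eq_mul, mul_one]
  congr!

theorem stmt7 (a b : ℝ) (hab : a < b) (f : ℝ → ℝ)
    (hf : ContDiffOn ℝ 2 f (Set.Icc a b))
    (hcase :
      -- case (1): f'' ≡ 0 on [a,b] and the constant value of f' is irrational
      ((∀ t ∈ Set.Icc a b,
          derivWithin (derivWithin f (Set.Icc a b)) (Set.Icc a b) t = 0) ∧
        ∃ r : ℝ, Irrational r ∧ ∀ t ∈ Set.Icc a b, derivWithin f (Set.Icc a b) t = r) ∨
      -- case (2): f'' ≠ 0 on [a,b] and n < f'(a), f'(b) < n + 1 for some integer n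
      ((∀ t ∈ Set.Icc a b,
          derivWithin (derivWithin f (Set.Icc a b)) (Set.Icc a b) t ≠ 0) ∧
        ∃ n : ℤ, (n : ℝ) < derivWithin f (Set.Icc a b) a ∧
          derivWithin f (Set.Icc a b) a < (n : ℝ) + 1 ∧
          (n : ℝ) < derivWithin f (Set.Icc a b) b ∧
          derivWithin f (Set.Icc a b) b < (n : ℝ) + 1)) :
    -- the points {f(εi)/ε}, for integers i with εi ∈ [a,b], are u.d. in [0,1] as ε → 0⁺
    ∀ c d : ℝ, 0 ≤ c → c ≤ d → d ≤ 1 →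
      Tendsto
        (fun ε : ℝ =>
          propIn (Finset.Icc ⌈a / ε⌉ ⌊b / ε⌋)
            (fun i : ℤ => Int.fract (f (ε * i) / ε) ∈ Set.Ico c d))
        (nhdsWithin 0 (Set.Ioi 0)) (nhds (d - c)) := by
  intro c d hc hcd hd
  have hnhds : ∀ t ∈ Set.Ioo a b, Set.Icc a b ∈ nhds t := fun t ht => Icc_mem_nhds ht.1 ht.2
  have hderiv : ∀ t ∈ Set.Ioo a b, derivWithin f (Set.Icc a b) t = deriv f t := fun t ht =>
    derivWithin_of_mem_nhds (hnhds t ht)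
  have hae : ∀ p : ℝ → Prop, (∀ᵐ t, t ∈ Set.Ioo a b → p t) → ∀ᵐ t, t ∈ Set.uIoc a b → p t := by
    intro p hp
    have hb : ∀ᵐ t : ℝ, t ≠ b := by simp [ae_iff]
    filter_upwards [hp, hb] with t ht htb hmem
    rw [Set.uIoc_of_le hab.le] at hmem
    exact ht ⟨hmem.1, lt_of_le_of_ne hmem.2 htb⟩
  -- Strict differentiability holds off the endpoints, and it remains to see that the derivative
  -- is almost everywhere irrational.
  refine tendsto_propIn hab (hae _ (ae_of_all _ fun t ht => ?_)) (hae _ ?_) hc hcd hd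
  · exact (hf.contDiffAt (hnhds t ht)).hasStrictDerivAt two_ne_zero
  rcases hcase with ⟨-, r, hr, hfr⟩ | ⟨hne, -⟩
  · refine ae_of_all _ fun t ht => ?_
    rw [← hderiv t ht, hfr t (Set.Ioo_subset_Icc_self ht)]
    exact hr
  · have hcont : ContinuousOn (derivWithin f (Set.Icc a b)) (Set.Icc a b) :=
      hf.continuousOn_derivWithin (uniqueDiffOn_Icc hab) (by norm_num)
    -- By Rolle's theorem `f'` is injective, so it takes rational values only on a countable set.
    have hrolle : ∀ x ∈ Set.Ioo a b, ∀ y ∈ Set.Ioo a b, x < y → deriv f x ≠ deriv f y := by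
      intro x hx y hy hxy heq
      rw [← hderiv x hx, ← hderiv y hy] at heq
      obtain ⟨z, hz, hz0⟩ := exists_deriv_eq_zero hxy
        (hcont.mono (Set.Icc_subset_Icc hx.1.le hy.2.le)) heq
      have hzab : z ∈ Set.Ioo a b := ⟨hx.1.trans hz.1, hz.2.trans hy.2⟩
      refine hne z (Set.Ioo_subset_Icc_self hzab) ?_
      rw [derivWithin_of_mem_nhds (hnhds z hzab), hz0]
    have hinj : Set.InjOn (deriv f) (Set.Ioo a b) := by
      intro x hx y hy heq
      rcases lt_trichotomy x y with h | h | h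
      · exact absurd heq (hrolle x hx y hy h)
      · exact h
      · exact absurd heq.symm (hrolle y hy x hx h)
    have hcount : {t | t ∈ Set.Ioo a b ∧ deriv f t ∈ Set.range ((↑) : ℚ → ℝ)}.Countable :=
      Set.MapsTo.countable_of_injOn (fun t ht => ht.2) (hinj.mono fun t ht => ht.1)
        (Set.countable_range _)
    filter_upwards [hcount.ae_notMem volume] with t ht htm hrat
    exact ht ⟨htm, hrat⟩
end

section
/- Let a < b and let f be a real-valued, twice continuously differentiable function on [a, b]. Assume that the set {x ∈ [a, b] : f''(x) = 0} is the union of finitely many distinct points and finitely many pairwise non-intersecting closed intervals, and that on every such interval where f'' ≡ 0, the (constant) value of f' is irrational. For each ε > 0 let P_ε be the finite family of points {f(εi)/ε} indexed by the integers i with εi ∈ [a, b]. Then P_ε is uniformly distributed in [0, 1] as ε → 0. -/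
/-!
By Weyl's criterion it is enough that, for each integer `h ≠ 0`, the mean over the grid points
`εi ∈ [a, b]` of `exp (2πi h f(εi)/ε)` tends to `0` (`propIn_tendsto_of_fourier`).

Fix a block length `L`. On a block of `L` consecutive grid points starting at `x = εi`, the phase
`f(εi)/ε` differs from an arithmetic progression with difference `f'(x)` by a quantity tending to `0`
uniformly in `x` as `ε → 0`, because `f'` is continuous. Replacing the long sum by its average over
shifts by `0, …, L - 1`, the mean is bounded, up to `o(1)`, by the grid mean of
`x ↦ |L⁻¹ ∑_{j < L} exp (2πi h j f'(x))|` (`norm_sum_Icc_le_blocks`, `norm_block_le`). This grid mean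
is a Riemann sum and converges to the mean value of that function over `[a, b]` (`tendsto_riemann`).
As `L → ∞` the function tends to `0` wherever `f'(x)` is irrational, so by dominated convergence the
bound tends to `0` as soon as `f'` is irrational almost everywhere (`tendsto_integral_blockSum`).

The hypothesis on the zeros of `f''` gives exactly this (`ae_irrational`): a level set of `f'` is
countable away from the zeros of `f''`, and on each interval of zeros `f'` is irrational.
-/

open MeasureTheory Filter

open Topology

/-! ### Weyl's criterion -/

lemma coe_mem_image_Ico {c d : ℝ} (hc : 0 ≤ c) (hd : d ≤ 1) (x : ℝ) :
    (x : UnitAddCircle) ∈ ((↑) : ℝ → UnitAddCircle) '' Set.Ico c d ↔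
      Int.fract x ∈ Set.Ico c d := by
  have hx : ((Int.fract x : ℝ) : UnitAddCircle) = x := by
    rw [← sub_eq_zero, ← AddCircle.coe_sub, AddCircle.coe_eq_zero_iff]
    exact ⟨-⌊x⌋, by rw [Int.fract]; simp⟩
  constructor
  · rintro ⟨y, hy, hyx⟩
    rw [← hx] at hyx
    have := (AddCircle.coe_eq_coe_iff_of_mem_Ico (p := (1 : ℝ)) (a := 0)
      ⟨hc.trans hy.1, by linarith [hy.2]⟩
      ⟨Int.fract_nonneg x, by simpa using Int.fract_lt_one x⟩).1 hyx
    rwa [← this]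
  · exact fun h => ⟨_, h, hx⟩

lemma volume_image_Ico {c d : ℝ} (hc : 0 ≤ c) (hd : d ≤ 1) :
    volume (((↑) : ℝ → UnitAddCircle) '' Set.Ico c d) = ENNReal.ofReal (d - c) := by
  have hmeas : MeasurableSet (((↑) : ℝ → UnitAddCircle) '' Set.Ico c d) := by
    have : ((↑) : ℝ → UnitAddCircle) '' Set.Ico c d
        = ((↑) : ℝ → UnitAddCircle) '' Set.Ioo c d ∪ ((↑) : ℝ → UnitAddCircle) '' (Set.Ico c d \ Set.Ioo c d) := by
      rw [← Set.image_union, Set.union_sdiff_cancel Set.Ioo_subset_Ico_self]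
    rw [this]
    refine ((QuotientAddGroup.isOpenMap_coe _ isOpen_Ioo).measurableSet).union ?_
    refine (Set.Finite.image _ ?_).measurableSet
    exact (Set.finite_singleton c).subset fun x hx => by
      by_contra h
      exact hx.2 ⟨lt_of_le_of_ne hx.1.1 (Ne.symm h), hx.1.2⟩
  have mp := UnitAddCircle.measurePreserving_mk 0
  rw [← mp.measure_preimage hmeas.nullMeasurableSet,
    Measure.restrict_apply (mp.measurable hmeas), ← Real.volume_Ico]
  refine measure_congr ?_
  have h01 : ∀ᵐ x : ℝ, x ∉ ({0, 1} : Set ℝ) :=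
    (Set.toFinite ({0, 1} : Set ℝ)).measure_zero volume |> measure_eq_zero_iff_ae_notMem.1
  filter_upwards [h01] with x hx
  simp only [Set.mem_insert_iff, Set.mem_singleton_iff, not_or] at hx
  apply propext
  change ((x : UnitAddCircle) ∈ ((↑) : ℝ → UnitAddCircle) '' Set.Ico c d ∧ x ∈ Set.Ioc (0:ℝ) (0+1)) ↔ x ∈ Set.Ico c d
  rw [coe_mem_image_Ico hc hd]
  constructor
  · rintro ⟨h1, h2⟩
    rwa [Int.fract_eq_self.2 ⟨h2.1.le, lt_of_le_of_ne (by linarith [h2.2]) hx.2⟩] at h1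
  · intro h
    have h0 : 0 < x := lt_of_le_of_ne (hc.trans h.1) (Ne.symm hx.1)
    have h1 : x < 1 := h.2.trans_le hd
    rw [Int.fract_eq_self.2 ⟨h0.le, h1⟩]
    exact ⟨h, h0, by linarith⟩

lemma volume_coe_singleton (c : ℝ) : volume ({(c : UnitAddCircle)} : Set UnitAddCircle) = 0 := by
  have mp := UnitAddCircle.measurePreserving_mk 0
  rw [← mp.measure_preimage (measurableSet_singleton _).nullMeasurableSet]
  refine Set.Countable.measure_zero ?_ _
  refine (Set.countable_range (fun n : ℤ => c + n)).mono fun x hx => ?_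
  have hx' : (x : UnitAddCircle) = c := hx
  rw [← sub_eq_zero, ← AddCircle.coe_sub, AddCircle.coe_eq_zero_iff] at hx'
  obtain ⟨n, hn⟩ := hx'
  exact ⟨n, by simp at hn; simp [hn]⟩

lemma volume_frontier_image_Ico (c d : ℝ) :
    volume (frontier (((↑) : ℝ → UnitAddCircle) '' Set.Ico c d)) = 0 := by
  have hcl : closure (((↑) : ℝ → UnitAddCircle) '' Set.Ico c d)
      ⊆ ((↑) : ℝ → UnitAddCircle) '' Set.Icc c d :=
    closure_minimal (Set.image_mono Set.Ico_subset_Icc_self)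
      (isCompact_Icc.image (AddCircle.continuous_mk' 1)).isClosed
  have hin : ((↑) : ℝ → UnitAddCircle) '' Set.Ioo c d
      ⊆ interior (((↑) : ℝ → UnitAddCircle) '' Set.Ico c d) :=
    interior_maximal (Set.image_mono Set.Ioo_subset_Ico_self)
      (QuotientAddGroup.isOpenMap_coe _ isOpen_Ioo)
  refine measure_mono_null (t := {(c : UnitAddCircle)} ∪ {(d : UnitAddCircle)}) ?_
    (measure_union_null (volume_coe_singleton c) (volume_coe_singleton d))
  rintro z ⟨hz1, hz2⟩
  obtain ⟨x, hx, rfl⟩ := hcl hz1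
  by_contra hne
  simp only [Set.mem_union, Set.mem_singleton_iff, not_or] at hne
  refine hz2 (hin ⟨x, ⟨lt_of_le_of_ne hx.1 ?_, lt_of_le_of_ne hx.2 ?_⟩, rfl⟩)
  · rintro rfl; exact hne.1 rfl
  · rintro rfl; exact hne.2 rfl

/-- Sufficiency in Weyl's criterion, for the averages over a finite set along a filter: continuous
test functions on the circle. -/
lemma tendsto_avg_of_fourier {α ι : Type*} {l : Filter α} (s : α → Finset ι) (x : α → ι → ℝ)
    (hne : ∀ᶠ t in l, (s t).Nonempty)
    (H : ∀ h : ℤ, h ≠ 0 → Tendsto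
      (fun t => (∑ i ∈ s t, fourier h (x t i : UnitAddCircle)) / ((s t).card : ℂ)) l (𝓝 0))
    (φ : C(UnitAddCircle, ℂ)) :
    Tendsto (fun t => (∑ i ∈ s t, φ (x t i : UnitAddCircle)) / ((s t).card : ℂ)) l
      (𝓝 (∫ z, φ z)) := by
  have : IsProbabilityMeasure (volume : Measure UnitAddCircle) := ⟨UnitAddCircle.measure_univ⟩
  have hint : ∀ ψ : C(UnitAddCircle, ℂ), Integrable (fun z => ψ z) volume := fun ψ =>
    ψ.continuous.integrable_of_hasCompactSupport (HasCompactSupport.of_compactSpace _)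
  have hspan : ∀ ψ ∈ Submodule.span ℂ (Set.range (@fourier (1 : ℝ))), Tendsto
      (fun t => (∑ i ∈ s t, ψ (x t i : UnitAddCircle)) / ((s t).card : ℂ)) l
      (𝓝 (∫ z, ψ z)) := by
    intro ψ hψ
    induction hψ using Submodule.span_induction with
    | mem ψ h =>
      obtain ⟨h, rfl⟩ := h
      by_cases h0 : h = 0
      · subst h0
        have : ∫ z : UnitAddCircle, (fourier 0 : C(UnitAddCircle, ℂ)) z = 1 := by
          simp only [fourier_zero]; simp
        rw [this]
        refine tendsto_const_nhds.congr' ?_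
        filter_upwards [hne] with t ht
        have : ((s t).card : ℂ) ≠ 0 := by exact_mod_cast ht.card_pos.ne'
        simp only [fourier_zero]
        simp [this]
      · have : ∫ z : UnitAddCircle, (fourier h : C(UnitAddCircle, ℂ)) z = 0 :=
          integral_eq_zero_of_add_right_eq_neg (fourier_add_half_inv_index h0 one_pos)
        rw [this]
        exact H h h0
    | zero => simpa using tendsto_const_nhds
    | add ψ χ _ _ h1 h2 =>
      have := h1.add h2
      rw [← integral_add (hint ψ) (hint χ)] at this
      refine this.congr fun t => ?_
      simp [Finset.sum_add_distrib, add_div]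
    | smul a ψ _ h1 =>
      have := h1.const_mul a
      rw [← integral_const_mul] at this
      refine this.congr fun t => ?_
      simp [← Finset.mul_sum, mul_div_assoc]
  have hmem : φ ∈ (Submodule.span ℂ (Set.range (@fourier (1 : ℝ)))).topologicalClosure := by
    rw [span_fourier_closure_eq_top]; trivial
  have hmem' : φ ∈ closure (Submodule.span ℂ (Set.range (@fourier (1 : ℝ))) :
    Set C(UnitAddCircle, ℂ)) := hmem
  rw [Metric.mem_closure_iff] at hmem'
  rw [Metric.tendsto_nhds]
  intro η hη
  obtain ⟨ψ, hψ, hd⟩ := hmem' (η / 3) (by positivity)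
  have hpt : ∀ z, ‖φ z - ψ z‖ ≤ η / 3 := fun z => by
    rw [← dist_eq_norm]; exact (ContinuousMap.dist_apply_le_dist z).trans hd.le
  filter_upwards [(Metric.tendsto_nhds.1 (hspan ψ hψ)) (η / 3) (by positivity)] with t ht
  have h1 : ‖(∑ i ∈ s t, φ (x t i : UnitAddCircle)) / ((s t).card : ℂ)
      - (∑ i ∈ s t, ψ (x t i : UnitAddCircle)) / ((s t).card : ℂ)‖ ≤ η / 3 := by
    rw [← sub_div, ← Finset.sum_sub_distrib, norm_div, Complex.norm_natCast]
    refine div_le_of_le_mul₀ (by positivity) (by positivity) ?_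
    refine (norm_sum_le_of_le _ fun i _ => hpt _).trans ?_
    simp [mul_comm]
  have h2 : ‖(∫ z, ψ z) - ∫ z, φ z‖ ≤ η / 3 := by
    rw [← integral_sub (hint ψ) (hint φ)]
    refine (norm_integral_le_of_norm_le_const (C := η / 3) (ae_of_all _ fun z => ?_)).trans ?_
    · rw [norm_sub_rev]; exact hpt z
    · simp
  rw [dist_eq_norm] at ht ⊢
  have := norm_add₃_le (a := (∑ i ∈ s t, φ (x t i : UnitAddCircle)) / ((s t).card : ℂ)
      - (∑ i ∈ s t, ψ (x t i : UnitAddCircle)) / ((s t).card : ℂ))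
      (b := (∑ i ∈ s t, ψ (x t i : UnitAddCircle)) / ((s t).card : ℂ) - ∫ z, ψ z)
      (c := (∫ z, ψ z) - ∫ z, φ z)
  rw [sub_add_sub_cancel, sub_add_sub_cancel] at this
  linarith

/-- Sufficiency in Weyl's criterion: vanishing mean of every nontrivial character gives weak
convergence of the empirical measures on the circle to Haar measure, and the portmanteau theorem
applies to arcs because their boundary is null. -/
lemma propIn_tendsto_of_fourier {α ι : Type*} {l : Filter α} (s : α → Finset ι) (x : α → ι → ℝ)
    (hne : ∀ᶠ t in l, (s t).Nonempty)
    (H : ∀ h : ℤ, h ≠ 0 → Tendsto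
      (fun t => (∑ i ∈ s t, fourier h (x t i : UnitAddCircle)) / ((s t).card : ℂ)) l (𝓝 0))
    {c d : ℝ} (hc : 0 ≤ c) (hcd : c ≤ d) (hd : d ≤ 1) :
    Tendsto (fun t => propIn (s t) fun i => Int.fract (x t i) ∈ Set.Ico c d) l (𝓝 (d - c)) := by
  classical
  have : IsProbabilityMeasure (volume : Measure UnitAddCircle) := ⟨UnitAddCircle.measure_univ⟩
  -- the empirical measure of the points, made total by an arbitrary choice when `s t = ∅`
  have hμ : ∀ t, ∃ μ : ProbabilityMeasure UnitAddCircle, (s t).Nonempty → (μ : Measure _) =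
      ((s t).card : ENNReal)⁻¹ • ∑ i ∈ s t, Measure.dirac (x t i : UnitAddCircle) := by
    intro t
    by_cases ht : (s t).Nonempty
    · refine ⟨⟨((s t).card : ENNReal)⁻¹ • ∑ i ∈ s t, Measure.dirac (x t i : UnitAddCircle),
        ⟨?_⟩⟩, fun _ => rfl⟩
      have : ((s t).card : ENNReal) ≠ 0 := by exact_mod_cast ht.card_pos.ne'
      simp [ENNReal.inv_mul_cancel this]
    · exact ⟨⟨volume, inferInstance⟩, fun h => absurd h ht⟩
  choose μ hμ using hμ
  obtain ⟨ν, hν⟩ : ∃ ν : ProbabilityMeasure UnitAddCircle, (ν : Measure UnitAddCircle) = volume :=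
    ⟨⟨volume, inferInstance⟩, rfl⟩
  have hlim : Tendsto μ l (𝓝 ν) := by
    rw [ProbabilityMeasure.tendsto_iff_forall_integral_rclike_tendsto ℂ]
    intro φ
    rw [hν]
    refine (tendsto_avg_of_fourier s x hne H φ.toContinuousMap).congr' ?_
    filter_upwards [hne] with t ht
    rw [hμ t ht, integral_smul_measure, integral_finsetSum_measure]
    · simp [div_eq_inv_mul]
    · intro i _
      exact φ.integrable _
  have key := ProbabilityMeasure.tendsto_measure_of_null_frontier_of_tendsto' hlim
    (E := ((↑) : ℝ → UnitAddCircle) '' Set.Ico c d)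
    (by rw [hν]; exact volume_frontier_image_Ico c d)
  have key2 := (ENNReal.tendsto_toReal (measure_ne_top _ _)).comp key
  rw [hν, volume_image_Ico hc hd, ENNReal.toReal_ofReal (by linarith)] at key2
  refine key2.congr' ?_
  filter_upwards [hne] with t ht
  rw [Function.comp_apply, hμ t ht, propIn]
  simp [Set.indicator_apply, coe_mem_image_Ico hc hd, -Set.mem_image, div_eq_inv_mul,
    Finset.sum_boole]

/-! ### Weyl sums along slowly varying phases -/

/-- The character `x ↦ exp (2πihx)` of `ℝ`, written with a real multiple of `I` in the exponent. -/
noncomputable def ex (h : ℤ) (x : ℝ) : ℂ := Complex.exp (Complex.I * ((2 * Real.pi * h * x : ℝ) : ℂ))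

lemma fourier_eq_ex (h : ℤ) (x : ℝ) : fourier h (x : UnitAddCircle) = ex h x := by
  rw [fourier_coe_apply, ex]
  congr 1
  push_cast
  ring

lemma ex_add (h : ℤ) (x y : ℝ) : ex h (x + y) = ex h x * ex h y := by
  rw [ex, ex, ex, ← Complex.exp_add]
  congr 1
  push_cast
  ring

lemma ex_nat_mul (h : ℤ) (j : ℕ) (x : ℝ) : ex h (j * x) = ex h x ^ j := by
  rw [ex, ex, ← Complex.exp_nat_mul]
  congr 1
  push_cast
  ring

lemma norm_ex (h : ℤ) (x : ℝ) : ‖ex h x‖ = 1 := Complex.norm_exp_I_mul_ofReal _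

lemma norm_ex_sub_le (h : ℤ) (x y : ℝ) : ‖ex h x - ex h y‖ ≤ 2 * Real.pi * |(h : ℝ)| * |x - y| := by
  have : ex h x - ex h y = ex h y * (ex h (x - y) - 1) := by
    rw [mul_sub, ← ex_add]; simp
  rw [this, norm_mul, norm_ex, one_mul]
  refine Real.norm_exp_I_mul_ofReal_sub_one_le.trans ?_
  simp [abs_of_pos Real.pi_pos]

lemma continuous_ex (h : ℤ) : Continuous (ex h) := by
  unfold ex; fun_prop

lemma ex_ne_one {h : ℤ} (hh : h ≠ 0) {x : ℝ} (hx : Irrational x) : ex h x ≠ 1 := by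
  intro h1
  rw [ex, Complex.exp_eq_one_iff] at h1
  obtain ⟨n, hn⟩ := h1
  have h2 : ((h * x : ℝ) : ℂ) = ((n : ℝ) : ℂ) := by
    have : (2 * (Real.pi : ℂ) * Complex.I) ≠ 0 := by
      simp [Real.pi_ne_zero, Complex.I_ne_zero]
    apply mul_left_cancel₀ this
    push_cast at hn ⊢
    linear_combination hn
  have h3 : (h : ℝ) * x = n := by exact_mod_cast h2
  exact (hx.intCast_mul hh).ne_int n h3

/-- Shifting the range of summation costs two boundary terms per unit of shift. -/
lemma norm_sum_sub_shift_le (φ : ℕ → ℂ) (hφ : ∀ k, ‖φ k‖ ≤ 1) (N j : ℕ) :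
    ‖∑ k ∈ Finset.range N, φ k - ∑ k ∈ Finset.range N, φ (k + j)‖ ≤ 2 * j := by
  induction j with
  | zero => simp
  | succ j ih =>
    have h1 : ∑ k ∈ Finset.range N, φ (k + j) - ∑ k ∈ Finset.range N, φ (k + (j + 1))
        = φ j - φ (N + j) := by
      have := Finset.sum_range_sub' (fun k => φ (k + j)) N
      rw [Finset.sum_sub_distrib] at this
      simpa [add_assoc, add_comm, add_left_comm] using this
    have h2 : ‖φ j - φ (N + j)‖ ≤ 2 := by
      refine (norm_sub_le _ _).trans ?_
      linarith [hφ j, hφ (N + j)]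
    have h3 := norm_add_le (∑ k ∈ Finset.range N, φ k - ∑ k ∈ Finset.range N, φ (k + j))
      (∑ k ∈ Finset.range N, φ (k + j) - ∑ k ∈ Finset.range N, φ (k + (j + 1)))
    rw [sub_add_sub_cancel, h1] at h3
    push_cast
    linarith

/-- A long sum is controlled by the average of its sums over short blocks of length `L`. -/
lemma norm_sum_le_blocks (φ : ℕ → ℂ) (hφ : ∀ k, ‖φ k‖ ≤ 1) (N : ℕ) {L : ℕ} (hL : 0 < L) :
    ‖∑ k ∈ Finset.range N, φ k‖ ≤
      (∑ k ∈ Finset.range N, ‖∑ j ∈ Finset.range L, φ (k + j)‖) / L + 2 * L := by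
  have hL' : (0 : ℝ) < L := by exact_mod_cast hL
  have h1 : (L : ℂ) * ∑ k ∈ Finset.range N, φ k =
      ∑ j ∈ Finset.range L, (∑ k ∈ Finset.range N, φ k - ∑ k ∈ Finset.range N, φ (k + j))
      + ∑ k ∈ Finset.range N, ∑ j ∈ Finset.range L, φ (k + j) := by
    rw [Finset.sum_sub_distrib, Finset.sum_comm (s := Finset.range N)]
    simp
  have h2 : L * ‖∑ k ∈ Finset.range N, φ k‖ ≤
      L * (2 * L) + ∑ k ∈ Finset.range N, ‖∑ j ∈ Finset.range L, φ (k + j)‖ := by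
    have h3 := congrArg norm h1
    rw [norm_mul, Complex.norm_natCast] at h3
    rw [h3]
    refine (norm_add_le _ _).trans (add_le_add ?_ (norm_sum_le _ _))
    refine (norm_sum_le_of_le (f := fun j => ∑ k ∈ Finset.range N, φ k
      - ∑ k ∈ Finset.range N, φ (k + j)) (n := fun _ => 2 * (L : ℝ)) _ fun j hj => ?_).trans
      (by simp)
    refine (norm_sum_sub_shift_le φ hφ N j).trans ?_
    have : (j : ℝ) ≤ L := by exact_mod_cast (Finset.mem_range.1 hj).le
    linarith
  rw [← sub_le_iff_le_add, le_div_iff₀ hL']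
  linarith

lemma sum_Icc_int {M : Type*} [AddCommMonoid M] (m n : ℤ) (φ : ℤ → M) :
    ∑ i ∈ Finset.Icc m n, φ i = ∑ k ∈ Finset.range (n + 1 - m).toNat, φ (m + k) := by
  symm
  refine Finset.sum_bij (fun k _ => m + (k : ℤ)) ?_ ?_ ?_ ?_
  · intro k hk; simp at hk ⊢; omega
  · intro k _ l _ h; simpa using h
  · intro i hi; simp at hi
    exact ⟨(i - m).toNat, by simp; omega, by omega⟩
  · intro k _; rfl

lemma norm_sum_Icc_le_blocks (φ : ℤ → ℂ) (hφ : ∀ k, ‖φ k‖ ≤ 1) (m n : ℤ) {L : ℕ} (hL : 0 < L) :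
    ‖∑ i ∈ Finset.Icc m n, φ i‖ ≤
      (∑ i ∈ Finset.Icc m n, ‖∑ j ∈ Finset.range L, φ (i + j)‖) / L + 2 * L := by
  rw [sum_Icc_int, sum_Icc_int]
  have := norm_sum_le_blocks (fun k => φ (m + k)) (fun k => hφ _) (n + 1 - m).toNat hL
  simpa [add_assoc] using this

/-! ### Riemann sums over the grid -/

lemma mul_mem_Icc {a b ε : ℝ} (hε : 0 < ε) {i : ℤ} (hi : i ∈ Finset.Icc ⌈a / ε⌉ ⌊b / ε⌋) :
    ε * i ∈ Set.Icc a b := by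
  rw [Finset.mem_Icc, Int.ceil_le, Int.le_floor, div_le_iff₀ hε, le_div_iff₀ hε] at hi
  constructor <;> linarith [hi.1, hi.2]

lemma tendsto_mul_ceil (a : ℝ) : Tendsto (fun ε : ℝ => ε * (⌈a / ε⌉ : ℝ)) (𝓝[>] 0) (𝓝 a) := by
  have h : Tendsto (fun ε : ℝ => a + ε) (𝓝[>] 0) (𝓝 a) := by
    have : Tendsto (fun ε : ℝ => a + ε) (𝓝 0) (𝓝 (a + 0)) :=
      (continuous_const.add continuous_id).tendsto 0
    rw [add_zero] at this
    exact this.mono_left nhdsWithin_le_nhds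
  refine tendsto_of_tendsto_of_tendsto_of_le_of_le' tendsto_const_nhds h ?_ ?_
  all_goals filter_upwards [self_mem_nhdsWithin] with ε hε
  all_goals have hε : 0 < ε := hε
  all_goals have h0 : ε * (a / ε) = a := by field_simp
  · have := mul_le_mul_of_nonneg_left (Int.le_ceil (a / ε)) hε.le
    linarith
  · have := mul_le_mul_of_nonneg_left (Int.ceil_lt_add_one (a / ε)).le hε.le
    linarith

lemma tendsto_mul_floor (b : ℝ) : Tendsto (fun ε : ℝ => ε * (⌊b / ε⌋ : ℝ)) (𝓝[>] 0) (𝓝 b) := by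
  have := (tendsto_mul_ceil (-b)).neg
  simpa [neg_div, Int.ceil_neg] using this

lemma tendsto_mul_floor_add_one (b : ℝ) :
    Tendsto (fun ε : ℝ => ε * (⌊b / ε⌋ + 1 : ℝ)) (𝓝[>] 0) (𝓝 b) := by
  have h : Tendsto (fun ε : ℝ => ε) (𝓝[>] 0) (𝓝 0) := nhdsWithin_le_nhds
  simpa [mul_add] using (tendsto_mul_floor b).add h

lemma tendsto_mul_card {a b : ℝ} (hab : a < b) :
    Tendsto (fun ε : ℝ => ε * ((Finset.Icc ⌈a / ε⌉ ⌊b / ε⌋).card : ℝ)) (𝓝[>] 0) (𝓝 (b - a)) := by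
  have h := (tendsto_mul_floor_add_one b).sub (tendsto_mul_ceil a)
  refine h.congr' ?_
  filter_upwards [h.eventually (lt_mem_nhds (sub_pos.2 hab)), self_mem_nhdsWithin] with ε h1 hε
  have hε : 0 < ε := hε
  rw [← mul_sub] at h1 ⊢
  have h2 : (0 : ℝ) < ⌊b / ε⌋ + 1 - ⌈a / ε⌉ := pos_of_mul_pos_right h1 hε.le
  have h3 : 0 < ⌊b / ε⌋ + 1 - ⌈a / ε⌉ := by exact_mod_cast h2
  have h4 : (((⌊b / ε⌋ + 1 - ⌈a / ε⌉).toNat : ℤ) : ℝ) = ((⌊b / ε⌋ + 1 - ⌈a / ε⌉ : ℤ) : ℝ) := by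
    rw [Int.toNat_of_nonneg h3.le]
  rw [Int.card_Icc]
  push_cast at h4
  rw [h4]

lemma tendsto_card_atTop {a b : ℝ} (hab : a < b) :
    Tendsto (fun ε : ℝ => ((Finset.Icc ⌈a / ε⌉ ⌊b / ε⌋).card : ℝ)) (𝓝[>] 0) atTop := by
  have := (tendsto_inv_nhdsGT_zero (𝕜 := ℝ)).atTop_mul_pos (sub_pos.2 hab) (tendsto_mul_card hab)
  refine this.congr' ?_
  filter_upwards [self_mem_nhdsWithin] with ε hε
  have hε : 0 < ε := hε
  field_simp

/-- Uniform continuity near a compact interval, allowing the second point to leave it. -/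
lemma exists_modulus {G : ℝ → ℝ} (hG : Continuous G) (a b : ℝ) {η : ℝ} (hη : 0 < η) :
    ∃ δ > 0, ∀ x ∈ Set.Icc a b, ∀ y, |y - x| < δ → |G y - G x| < η := by
  have := isCompact_Icc.uniformContinuousAt_of_continuousAt (s := Set.Icc a b) G
    (fun x _ => hG.continuousAt) (Metric.dist_mem_uniformity hη)
  obtain ⟨δ, hδ, h⟩ := Metric.mem_uniformity_dist.1 this
  refine ⟨δ, hδ, fun x hx y hy => ?_⟩
  have h1 := h (a := x) (b := y) (by rwa [dist_comm, Real.dist_eq]) hx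
  simpa [dist_comm, Real.dist_eq, abs_sub_comm] using h1

/-- Averages over the grid points `εi ∈ [a, b]` converge to the mean value of `K`. -/
lemma tendsto_riemann {a b : ℝ} (hab : a < b) {K : ℝ → ℝ} (hK : Continuous K) :
    Tendsto (fun ε : ℝ => (∑ i ∈ Finset.Icc ⌈a / ε⌉ ⌊b / ε⌋, K (ε * i)) /
      ((Finset.Icc ⌈a / ε⌉ ⌊b / ε⌋).card : ℝ)) (𝓝[>] 0) (𝓝 ((∫ x in a..b, K x) / (b - a))) := by
  have hne : b - a ≠ 0 := (sub_pos.2 hab).ne'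
  have hint : ∀ x y, IntervalIntegrable K volume x y := fun x y => hK.intervalIntegrable x y
  -- the integral over the union of the grid cells
  have h1 : Tendsto (fun ε : ℝ => ∫ x in (ε * ⌈a / ε⌉)..(ε * (⌊b / ε⌋ + 1)), K x) (𝓝[>] 0)
      (𝓝 (∫ x in a..b, K x)) := by
    have hc : Continuous fun x => ∫ t in (0 : ℝ)..x, K t := intervalIntegral.continuous_primitive hint 0
    have := ((hc.tendsto b).comp (tendsto_mul_floor_add_one b)).sub
      ((hc.tendsto a).comp (tendsto_mul_ceil a))
    simpa [Function.comp_def, intervalIntegral.integral_interval_sub_left, hint] using this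
  have hcell : ∀ η > 0, ∀ᶠ ε : ℝ in 𝓝[>] 0,
      |ε * ∑ i ∈ Finset.Icc ⌈a / ε⌉ ⌊b / ε⌋, K (ε * i)
        - ∫ x in (ε * ⌈a / ε⌉)..(ε * (⌊b / ε⌋ + 1)), K x|
        ≤ η * (ε * ((Finset.Icc ⌈a / ε⌉ ⌊b / ε⌋).card : ℝ)) := by
    intro η hη
    obtain ⟨δ, hδ, hmod⟩ := exists_modulus hK a b hη
    have hev := ((tendsto_mul_floor_add_one b).sub (tendsto_mul_ceil a)).eventually
      (lt_mem_nhds (sub_pos.2 hab))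
    filter_upwards [Ioo_mem_nhdsGT hδ, hev] with ε hε h1
    have hε0 : 0 < ε := hε.1
    rw [← mul_sub] at h1
    have h2 : (0 : ℝ) < ⌊b / ε⌋ + 1 - ⌈a / ε⌉ := pos_of_mul_pos_right h1 hε0.le
    have h3 : 0 < ⌊b / ε⌋ + 1 - ⌈a / ε⌉ := by exact_mod_cast h2
    have hcells : ∫ x in (ε * ⌈a / ε⌉)..(ε * (⌊b / ε⌋ + 1)), K x
        = ∑ i ∈ Finset.Icc ⌈a / ε⌉ ⌊b / ε⌋, ∫ x in (ε * i)..(ε * (i + 1)), K x := by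
      rw [sum_Icc_int]
      have h4 := intervalIntegral.sum_integral_adjacent_intervals (f := K) (μ := volume)
        (a := fun k : ℕ => ε * (⌈a / ε⌉ + k)) (n := (⌊b / ε⌋ + 1 - ⌈a / ε⌉).toNat)
        (fun k _ => hint _ _)
      have h5 : (((⌊b / ε⌋ + 1 - ⌈a / ε⌉).toNat : ℤ) : ℝ) = ((⌊b / ε⌋ + 1 - ⌈a / ε⌉ : ℤ) : ℝ) := by
        rw [Int.toNat_of_nonneg h3.le]
      push_cast at h5
      rw [h5] at h4
      simp only [Nat.cast_zero, add_zero, Nat.cast_add, Nat.cast_one, add_sub_cancel] at h4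
      rw [← h4]
      refine Finset.sum_congr rfl fun k _ => ?_
      push_cast
      rw [add_assoc]
    rw [hcells, Finset.mul_sum, ← Finset.sum_sub_distrib]
    refine (Finset.abs_sum_le_sum_abs _ _).trans ?_
    have hone : ∀ i ∈ Finset.Icc ⌈a / ε⌉ ⌊b / ε⌋,
        |ε * K (ε * i) - ∫ x in (ε * i)..(ε * (i + 1)), K x| ≤ η * ε := by
      intro i hi
      have hlen : ε * (i + 1 : ℝ) - ε * i = ε := by ring
      have : ε * K (ε * i) = ∫ x in (ε * i)..(ε * (i + 1)), K (ε * i) := by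
        rw [intervalIntegral.integral_const, hlen, smul_eq_mul]
      rw [this, ← intervalIntegral.integral_sub (by simp) (hint _ _)]
      have := intervalIntegral.norm_integral_le_of_norm_le_const (a := ε * i) (b := ε * (i + 1))
        (f := fun x => K (ε * i) - K x) (C := η) ?_
      · rwa [hlen, abs_of_pos hε0, Real.norm_eq_abs] at this
      · intro x hx
        rw [Set.uIoc_of_le (by linarith)] at hx
        rw [Real.norm_eq_abs, abs_sub_comm]
        refine (hmod _ (mul_mem_Icc hε0 hi) x ?_).le
        rw [abs_of_pos (by linarith [hx.1])]
        linarith [hx.2, hε.2]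
    refine (Finset.sum_le_sum hone).trans ?_
    rw [Finset.sum_const, nsmul_eq_mul]
    linarith
  have h2 : Tendsto (fun ε : ℝ => ε * ∑ i ∈ Finset.Icc ⌈a / ε⌉ ⌊b / ε⌋, K (ε * i)
        - ∫ x in (ε * ⌈a / ε⌉)..(ε * (⌊b / ε⌋ + 1)), K x) (𝓝[>] 0) (𝓝 0) := by
    rw [Metric.tendsto_nhds]
    intro η hη
    have hpos : 0 < b - a + 1 := by linarith
    filter_upwards [hcell (η / (2 * (b - a + 1))) (by positivity),
      (tendsto_mul_card hab).eventually (gt_mem_nhds (show b - a < b - a + 1 by linarith))]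
      with ε h3 h4
    rw [Real.dist_eq, sub_zero]
    refine h3.trans_lt ?_
    calc _ ≤ η / (2 * (b - a + 1)) * (b - a + 1) := by gcongr
      _ = η / 2 := by field_simp
      _ < η := by linarith
  have h3 := (h2.add h1).div (tendsto_mul_card hab) hne
  rw [zero_add] at h3
  refine h3.congr' ?_
  filter_upwards [self_mem_nhdsWithin] with ε hε
  have hε : 0 < ε := hε
  simp only [Pi.div_apply, sub_add_cancel]
  exact mul_div_mul_left _ _ (ne_of_gt hε)

/-! ### Equidistribution for an everywhere differentiable function -/

/-- The normalised geometric sum of length `L` with ratio `exp (2πihG(x))`; its modulus is the size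
of a Weyl sum over a short block near `x`. -/
noncomputable def blockSum (h : ℤ) (G : ℝ → ℝ) (L : ℕ) (x : ℝ) : ℝ :=
  ‖∑ j ∈ Finset.range L, ex h (G x) ^ j‖ / L

lemma continuous_blockSum (h : ℤ) {G : ℝ → ℝ} (hG : Continuous G) (L : ℕ) :
    Continuous (blockSum h G L) := by
  have := (continuous_ex h).comp hG
  simp only [Function.comp_def] at this
  unfold blockSum
  fun_prop

lemma blockSum_le_one (h : ℤ) (G : ℝ → ℝ) (L : ℕ) (x : ℝ) : blockSum h G L x ≤ 1 := by
  refine div_le_one_of_le₀ ?_ (by positivity)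
  refine (norm_sum_le_of_le (n := fun _ => (1 : ℝ)) _ fun j _ => ?_).trans (by simp)
  simp [norm_ex]

lemma blockSum_nonneg (h : ℤ) (G : ℝ → ℝ) (L : ℕ) (x : ℝ) : 0 ≤ blockSum h G L x := by
  unfold blockSum; positivity

lemma tendsto_blockSum {h : ℤ} (hh : h ≠ 0) {G : ℝ → ℝ} {x : ℝ} (hx : Irrational (G x)) :
    Tendsto (fun L => blockSum h G L x) atTop (𝓝 0) := by
  have hne := ex_ne_one hh hx
  have hpos : 0 < ‖ex h (G x) - 1‖ := norm_pos_iff.2 (sub_ne_zero.2 hne)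
  refine squeeze_zero (fun L => blockSum_nonneg h G L x) (fun L => ?_)
    (tendsto_const_div_atTop_nhds_zero_nat (2 / ‖ex h (G x) - 1‖))
  unfold blockSum
  gcongr
  rw [geom_sum_eq hne, norm_div]
  gcongr
  refine (norm_sub_le _ _).trans ?_
  rw [norm_pow, norm_ex, norm_one]
  norm_num

lemma tendsto_integral_blockSum {a b : ℝ} (hab : a < b) {h : ℤ} (hh : h ≠ 0) {G : ℝ → ℝ}
    (hG : Continuous G) (hirr : ∀ᵐ x : ℝ, x ∈ Set.Icc a b → Irrational (G x)) :
    Tendsto (fun L => ∫ x in a..b, blockSum h G L x) atTop (𝓝 0) := by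
  have := intervalIntegral.tendsto_integral_filter_of_dominated_convergence (μ := volume)
    (a := a) (b := b) (F := fun L x => blockSum h G L x) (f := fun _ => (0 : ℝ)) (l := atTop)
    (fun _ => 1)
    (Eventually.of_forall fun L => (continuous_blockSum h hG L).aestronglyMeasurable)
    (Eventually.of_forall fun L => ae_of_all _ fun x _ => by
      rw [Real.norm_of_nonneg (blockSum_nonneg h G L x)]; exact blockSum_le_one h G L x)
    (by simp)
    (by
      filter_upwards [hirr] with x hx hxm
      rw [Set.uIoc_of_le hab.le] at hxm
      exact tendsto_blockSum hh (hx (Set.Ioc_subset_Icc_self hxm)))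
  simpa using this

/-- First-order Taylor estimate in terms of the oscillation of the derivative. -/
lemma abs_taylor_le {F G : ℝ → ℝ} (hF : ∀ x, HasDerivAt F (G x) x) {x δ η y : ℝ}
    (hmod : ∀ y, |y - x| < δ → |G y - G x| < η) (hy0 : 0 ≤ y) (hy : y < δ) :
    |F (x + y) - F x - y * G x| ≤ η * y := by
  have := Convex.norm_image_sub_le_of_norm_hasDerivWithin_le (s := Set.Icc x (x + y))
    (f := fun t => F t - t * G x) (f' := fun t => G t - 1 * G x) (C := η) (x := x) (y := x + y)
    (fun t _ => ((hF t).sub ((hasDerivAt_id t).mul_const (G x))).hasDerivWithinAt)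
    (fun t ht => by
      rw [one_mul]
      refine (hmod t ?_).le
      rw [abs_of_nonneg (by linarith [ht.1])]
      linarith [ht.2])
    (convex_Icc _ _) ⟨le_rfl, by linarith⟩ ⟨by linarith, le_rfl⟩
  rw [add_sub_cancel_left, Real.norm_eq_abs, Real.norm_eq_abs, abs_of_nonneg hy0] at this
  convert this using 2
  ring

/-- On a block of length `L` starting at a grid point, the phase `F (εi) / ε` is an arithmetic
progression with difference `G (εi)` up to a small error. -/
lemma norm_block_le {F G : ℝ → ℝ} (hF : ∀ x, HasDerivAt F (G x) x) (h : ℤ) {ε δ η : ℝ} (hε : 0 < ε)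
    (hη : 0 < η) {L : ℕ} (hL : 0 < L) (hεL : ε * L < δ) (i : ℤ)
    (hmod : ∀ y, |y - ε * i| < δ → |G y - G (ε * i)| < η) :
    ‖∑ j ∈ Finset.range L, ex h (F (ε * ((i + (j : ℤ) : ℤ) : ℝ)) / ε)‖ / L
      ≤ blockSum h G L (ε * i) + 2 * Real.pi * |(h : ℝ)| * (η * L) := by
  have hL' : (0 : ℝ) < L := by exact_mod_cast hL
  set x : ℝ := ε * i with hx
  have hmain : ∑ j ∈ Finset.range L, ex h (F x / ε + j * G x)
      = ex h (F x / ε) * ∑ j ∈ Finset.range L, ex h (G x) ^ j := by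
    rw [Finset.mul_sum]
    exact Finset.sum_congr rfl fun j _ => by rw [ex_add, ex_nat_mul]
  have hterm : ∀ j ∈ Finset.range L,
      ‖ex h (F (ε * ((i + (j : ℤ) : ℤ) : ℝ)) / ε) - ex h (F x / ε + j * G x)‖
        ≤ 2 * Real.pi * |(h : ℝ)| * (η * L) := by
    intro j hj
    have hjL : (j : ℝ) ≤ L := by exact_mod_cast (Finset.mem_range.1 hj).le
    refine (norm_ex_sub_le _ _ _).trans ?_
    gcongr
    have h1 := abs_taylor_le hF hmod (y := ε * j) (by positivity)
      (lt_of_le_of_lt (by gcongr) hεL)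
    have h2 : F (ε * ((i + (j : ℤ) : ℤ) : ℝ)) / ε - (F x / ε + j * G x)
        = (F (x + ε * j) - F x - ε * j * G x) / ε := by
      have : ε * ((i + (j : ℤ) : ℤ) : ℝ) = x + ε * j := by push_cast; rw [hx]; ring
      rw [this]
      field_simp
      ring
    rw [h2, abs_div, abs_of_pos hε, div_le_iff₀ hε]
    refine h1.trans ?_
    calc η * (ε * j) = η * j * ε := by ring
      _ ≤ η * L * ε := by gcongr
  have hsum : ‖∑ j ∈ Finset.range L, ex h (F (ε * ((i + (j : ℤ) : ℤ) : ℝ)) / ε)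
      - ∑ j ∈ Finset.range L, ex h (F x / ε + j * G x)‖
      ≤ L * (2 * Real.pi * |(h : ℝ)| * (η * L)) := by
    rw [← Finset.sum_sub_distrib]
    exact (norm_sum_le_of_le _ hterm).trans (by simp)
  have htri := norm_le_norm_add_norm_sub' (∑ j ∈ Finset.range L,
    ex h (F (ε * ((i + (j : ℤ) : ℤ) : ℝ)) / ε)) (∑ j ∈ Finset.range L, ex h (F x / ε + j * G x))
  have hn : ‖∑ j ∈ Finset.range L, ex h (F x / ε + j * G x)‖
      = ‖∑ j ∈ Finset.range L, ex h (G x) ^ j‖ := by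
    rw [hmain, norm_mul, norm_ex, one_mul]
  rw [hn] at htri
  rw [div_le_iff₀ hL', blockSum, add_mul, div_mul_cancel₀ _ hL'.ne']
  linarith

/-- The Weyl sums are `o(1/ε)`. Their normalised size is at most the mean of `blockSum` over the grid,
up to errors vanishing with `ε`; the mean tends to an integral, which is small for large `L`. -/
lemma weyl_sum_tendsto {a b : ℝ} (hab : a < b) {F G : ℝ → ℝ} (hF : ∀ x, HasDerivAt F (G x) x)
    (hG : Continuous G) (hirr : ∀ᵐ x : ℝ, x ∈ Set.Icc a b → Irrational (G x)) {h : ℤ}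
    (hh : h ≠ 0) :
    Tendsto (fun ε : ℝ => (∑ i ∈ Finset.Icc ⌈a / ε⌉ ⌊b / ε⌋,
      fourier h ((F (ε * i) / ε : ℝ) : UnitAddCircle)) /
        ((Finset.Icc ⌈a / ε⌉ ⌊b / ε⌋).card : ℂ)) (𝓝[>] 0) (𝓝 0) := by
  simp only [fourier_eq_ex]
  rw [Metric.tendsto_nhds]
  intro η hη
  -- the block length: the limiting mean of `blockSum` becomes small
  obtain ⟨L, hLint, hL⟩ : ∃ L : ℕ, (∫ x in a..b, blockSum h G L x) / (b - a) < η / 4 ∧ 0 < L := by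
    have h1 := (tendsto_integral_blockSum hab hh hG hirr).div_const (b - a)
    rw [zero_div] at h1
    exact ((h1.eventually (gt_mem_nhds (by positivity))).and (eventually_gt_atTop 0)).exists
  have hL' : (0 : ℝ) < L := by exact_mod_cast hL
  have hh' : 0 < |(h : ℝ)| := by simpa using hh
  have hC : 0 < 2 * Real.pi * |(h : ℝ)| * L := by positivity
  obtain ⟨δ, hδ, hmod⟩ := exists_modulus hG a b
    (η := η / (4 * (2 * Real.pi * |(h : ℝ)| * L))) (by positivity)
  filter_upwards [Ioo_mem_nhdsGT (show 0 < δ / L by positivity),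
    (tendsto_riemann hab (continuous_blockSum h hG L)).eventually (gt_mem_nhds hLint),
    (tendsto_card_atTop hab).eventually_gt_atTop (2 * L / (η / 4))] with ε hε hR hN
  have hε0 : 0 < ε := hε.1
  set S := Finset.Icc ⌈a / ε⌉ ⌊b / ε⌋ with hS
  have hN0 : (0 : ℝ) < S.card := lt_trans (by positivity) hN
  rw [div_lt_iff₀ hN0] at hR
  rw [div_lt_iff₀ (by positivity)] at hN
  rw [dist_zero_right, norm_div, Complex.norm_natCast, div_lt_iff₀ hN0]
  have h1 := norm_sum_Icc_le_blocks (fun i : ℤ => ex h (F (ε * i) / ε))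
    (fun i => (norm_ex _ _).le) ⌈a / ε⌉ ⌊b / ε⌋ hL
  rw [← hS, Finset.sum_div] at h1
  have h2 := Finset.sum_le_sum fun i (hi : i ∈ S) =>
    norm_block_le hF h hε0 (by positivity) hL ((lt_div_iff₀ hL').1 hε.2) i
      (hmod _ (mul_mem_Icc hε0 hi))
  have h3 : 2 * Real.pi * |(h : ℝ)| * (η / (4 * (2 * Real.pi * |(h : ℝ)| * L)) * L) = η / 4 := by
    field_simp
  rw [h3, Finset.sum_add_distrib, Finset.sum_const, nsmul_eq_mul] at h2
  have h4 := h1.trans (add_le_add_left h2 _)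
  linarith [mul_pos hη hN0]

/-! ### Level sets of the derivative -/

/-- A level set of `g` is countable at the points where `g` has a nonzero derivative, since such
points are isolated in it. -/
lemma countable_level (g : ℝ → ℝ) (s : Set ℝ) (hg : DifferentiableOn ℝ g s) (q : ℝ) :
    {x ∈ s | g x = q ∧ derivWithin g s x ≠ 0}.Countable := by
  refine Set.Countable.mono ?_ (countable_setOfPred_isolated_right_within
    (s := {x ∈ s | g x = q ∧ derivWithin g s x ≠ 0}))
  intro x hx
  refine ⟨hx, ?_⟩
  have h1 := (hg x hx.1).hasDerivWithinAt.eventually_ne (c := q) hx.2.2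
  have h2 : 𝓝[{x ∈ s | g x = q ∧ derivWithin g s x ≠ 0} ∩ Set.Ioi x] x ≤ 𝓝[s \ {x}] x :=
    nhdsWithin_mono _ fun y hy => ⟨hy.1.1, (ne_of_gt hy.2 : y ≠ x)⟩
  rw [← Filter.eventually_false_iff_eq_bot]
  filter_upwards [h2 h1, self_mem_nhdsWithin] with y hy hy2
  exact hy hy2.1.2.1

/-- Each rational value is taken by `g` on a countable set: away from the zeros of the derivative the
level set is countable, and the nondegenerate intervals of zeros carry irrational values only. -/
lemma ae_irrational (a b : ℝ) (g : ℝ → ℝ) (hg : DifferentiableOn ℝ g (Set.Icc a b))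
    (hzero : ∃ (P : Finset ℝ) (n : ℕ) (c d : Fin n → ℝ),
      ({x ∈ Set.Icc a b | derivWithin g (Set.Icc a b) x = 0} = ↑P ∪ ⋃ k, Set.Icc (c k) (d k)) ∧
      (∀ k, ∃ r : ℝ, Irrational r ∧ ∀ t ∈ Set.Icc (c k) (d k), g t = r)) :
    ∀ᵐ x : ℝ, x ∈ Set.Icc a b → Irrational (g x) := by
  obtain ⟨P, n, c, d, hset, hval⟩ := hzero
  have hcount : ((P : Set ℝ) ∪ ⋃ q : ℚ, {x ∈ Set.Icc a b |
      g x = q ∧ derivWithin g (Set.Icc a b) x ≠ 0}).Countable :=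
    P.countable_toSet.union (Set.countable_iUnion fun q => countable_level g _ hg q)
  filter_upwards [measure_eq_zero_iff_ae_notMem.1 (hcount.measure_zero volume)] with x hx hxab
  rintro ⟨q, hq⟩
  simp only [Set.mem_union, Set.mem_iUnion, not_or, not_exists] at hx
  by_cases h0 : derivWithin g (Set.Icc a b) x = 0
  · have hmem : x ∈ (P : Set ℝ) ∪ ⋃ k, Set.Icc (c k) (d k) := by
      rw [← hset]; exact ⟨hxab, h0⟩
    rcases hmem with h | h
    · exact hx.1 h
    · obtain ⟨k, hk⟩ := Set.mem_iUnion.1 h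
      obtain ⟨r, hr, hrt⟩ := hval k
      exact hr ⟨q, by rw [hq, hrt x hk]⟩
  · exact hx.2 q ⟨hxab, hq.symm, h0⟩

/-! ### Conclusion -/

lemma propIn_congr {ι : Type*} {s : Finset ι} {P Q : ι → Prop} (h : ∀ i ∈ s, P i ↔ Q i) :
    propIn s P = propIn s Q := by
  classical
  unfold propIn
  congr 3
  ext i
  simp only [Finset.mem_filter]
  exact and_congr_right (h i)

theorem stmt8 (a b : ℝ) (hab : a < b) (f : ℝ → ℝ)
    (hf : ContDiffOn ℝ 2 f (Set.Icc a b))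
    -- the zero set of f'' on [a,b] is a finite union of points and of
    -- pairwise non-intersecting closed intervals, on each of which the
    -- (constant) value of f' is irrational
    (hzero : ∃ (P : Finset ℝ) (n : ℕ) (c d : Fin n → ℝ),
      (∀ k, c k < d k) ∧
      (∀ k, Set.Icc (c k) (d k) ⊆ Set.Icc a b) ∧
      (Pairwise fun k l => Disjoint (Set.Icc (c k) (d k)) (Set.Icc (c l) (d l))) ∧
      ({x ∈ Set.Icc a b |
          derivWithin (derivWithin f (Set.Icc a b)) (Set.Icc a b) x = 0}
        = ↑P ∪ ⋃ k, Set.Icc (c k) (d k)) ∧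
      (∀ k, ∃ r : ℝ, Irrational r ∧
        ∀ t ∈ Set.Icc (c k) (d k), derivWithin f (Set.Icc a b) t = r)) :
    -- the points {f(εi)/ε}, for integers i with εi ∈ [a,b], are u.d. in [0,1] as ε → 0⁺
    ∀ c d : ℝ, 0 ≤ c → c ≤ d → d ≤ 1 →
      Tendsto
        (fun ε : ℝ =>
          propIn (Finset.Icc ⌈a / ε⌉ ⌊b / ε⌋)
            (fun i : ℤ => Int.fract (f (ε * i) / ε) ∈ Set.Ico c d))
        (nhdsWithin 0 (Set.Ioi 0)) (nhds (d - c)) := by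
  intro c d hc hcd hd
  have huniq := uniqueDiffOn_Icc hab
  have hg1 : ContDiffOn ℝ 1 (derivWithin f (Set.Icc a b)) (Set.Icc a b) :=
    hf.derivWithin huniq (by norm_num)
  have hirr := ae_irrational a b _ (hg1.differentiableOn one_ne_zero) (by
    obtain ⟨P, n, c, d, -, -, -, h1, h2⟩ := hzero
    exact ⟨P, n, c, d, h1, h2⟩)
  -- extend `f'` by constants, and `f` accordingly, so that shifted grid points need no care
  set G : ℝ → ℝ := Set.IccExtend hab.le ((Set.Icc a b).domRestrict (derivWithin f (Set.Icc a b)))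
    with hGdef
  have hG : Continuous G := (continuousOn_iff_continuous_domRestrict.1 hg1.continuousOn).Icc_extend'
  have hGeq : ∀ x ∈ Set.Icc a b, G x = derivWithin f (Set.Icc a b) x := fun x hx => by
    rw [hGdef, Set.IccExtend_of_mem _ _ hx]; rfl
  set F : ℝ → ℝ := fun x => f a + ∫ t in a..x, G t with hFdef
  have hF : ∀ x, HasDerivAt F (G x) x := fun x =>
    (hG.integral_hasStrictDerivAt a x).hasDerivAt.const_add (f a)
  have hFeq : ∀ x ∈ Set.Icc a b, F x = f x := by
    refine eq_of_derivWithin_eq (fun x _ => (hF x).differentiableAt.differentiableWithinAt)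
      (hf.differentiableOn two_ne_zero) (fun x hx => ?_) (by simp [hFdef])
    have hx' := Set.Ico_subset_Icc_self hx
    rw [(hF x).hasDerivWithinAt.derivWithin (huniq x hx'), hGeq x hx']
  have hmain := propIn_tendsto_of_fourier (l := 𝓝[>] (0 : ℝ))
    (fun ε => Finset.Icc ⌈a / ε⌉ ⌊b / ε⌋) (fun ε i => F (ε * i) / ε)
    (by
      filter_upwards [(tendsto_card_atTop hab).eventually_gt_atTop 0] with ε h
      exact Finset.card_pos.1 (by exact_mod_cast h))
    (fun h hh => weyl_sum_tendsto hab hF hG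
      (by filter_upwards [hirr] with x hx hxm; rw [hGeq x hxm]; exact hx hxm) hh)
    hc hcd hd
  refine hmain.congr' ?_
  filter_upwards [self_mem_nhdsWithin] with ε hε
  exact propIn_congr fun i hi => by rw [hFeq _ (mul_mem_Icc hε hi)]
end
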